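/- arXiv:1701.01971 — 3 statements merged into one kernel-verified Lean document; each statement's English description precedes it below -/
import Mathlib

section
/- Let (Q, Δ, B) be a nondeterministic Büchi automaton with |Q| = n, u an ω-word, and c the canonical rank function of the run DAG of the automaton on u. Then every vertex v of the run DAG satisfies c(v) < 2n or c(v) = ∞, and c(v) = ∞ holds if and only if v is B-recurring. -/
/-- A leveled DAG over `Q`: vertex set a subset of `ℕ × Q`, every edge goes from a
vertex on some level `i` to a vertex on level `i + 1`. -/
structure LDAG (Q : Type*) where
  V : Set (ℕ × Q)
  E : ℕ × Q → ℕ × Q → Prop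
  edge_mem : ∀ ⦃v w⦄, E v w → v ∈ V ∧ w ∈ V
  edge_level : ∀ ⦃v w⦄, E v w → w.1 = v.1 + 1

namespace LDAG

variable {Q : Type*}

/-- `w` is a descendant of `v` (including `v` itself). -/
def Desc (D : LDAG Q) : ℕ × Q → ℕ × Q → Prop := Relation.ReflTransGen D.E

/-- A vertex is finitary if it has only finitely many descendants. -/
def Finitary (D : LDAG Q) (v : ℕ × Q) : Prop := {w | D.Desc v w}.Finite

/-- A vertex is `B`-free if no descendant of it (including itself) is `B`-tagged. -/
def BFree (D : LDAG Q) (B : Set Q) (v : ℕ × Q) : Prop :=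
  ∀ w, D.Desc v w → w.2 ∉ B

/-- A vertex is `B`-recurring if some infinite path starting in it contains infinitely
many `B`-tagged vertices. -/
def BRecurring (D : LDAG Q) (B : Set Q) (v : ℕ × Q) : Prop :=
  ∃ p : ℕ → ℕ × Q, p 0 = v ∧ (∀ n, D.E (p n) (p (n + 1))) ∧
    ∀ m, ∃ n, m ≤ n ∧ (p n).2 ∈ B

/-- The subgraph of `D` induced by the set `S` of vertices. -/
def induced (D : LDAG Q) (S : Set (ℕ × Q)) : LDAG Q where
  V := D.V ∩ S
  E v w := D.E v w ∧ v ∈ S ∧ w ∈ S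
  edge_mem := fun _ _ h => ⟨⟨(D.edge_mem h.1).1, h.2.1⟩, ⟨(D.edge_mem h.1).2, h.2.2⟩⟩
  edge_level := fun _ _ h => D.edge_level h.1

/-- One peeling step: first remove all finitary vertices, then remove all vertices that
are `B`-free in the resulting induced subgraph. -/
def peel (B : Set Q) (D : LDAG Q) : LDAG Q :=
  let D₁ := D.induced {v | ¬ D.Finitary v}
  D₁.induced {v | ¬ D₁.BFree B v}

end LDAG

/-- The run DAG of the Büchi automaton with transition relation `Δ` on the ω-word `u`:
vertex set `ℕ × Q`, edges from `⟨i, q⟩` to `⟨i+1, q'⟩` whenever `(q, u i, q') ∈ Δ`. -/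
def runDAG {Q A : Type*} (Δ : Set (Q × A × Q)) (u : ℕ → A) : LDAG Q where
  V := Set.univ
  E v w := w.1 = v.1 + 1 ∧ (v.2, u v.1, w.2) ∈ Δ
  edge_mem := fun _ _ _ => ⟨trivial, trivial⟩
  edge_level := fun _ _ h => h.1

namespace LDAG

/-- The set of vertices assigned a canonical rank `< k` (successive peeling):
vertices of even rank `2i` are those finitary in the subgraph induced by the vertices of
rank `≥ 2i`; vertices of odd rank `2i+1` are those `B`-free in the subgraph induced by
the vertices of rank `≥ 2i+1`. -/
def rankBelow {Q : Type*} (B : Set Q) (D : LDAG Q) : ℕ → Set (ℕ × Q)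
  | 0 => ∅
  | k + 1 =>
    rankBelow B D k ∪
      (if k % 2 = 0 then
        {v | v ∈ (D.induced (rankBelow B D k)ᶜ).V ∧
          (D.induced (rankBelow B D k)ᶜ).Finitary v}
      else
        {v | v ∈ (D.induced (rankBelow B D k)ᶜ).V ∧
          (D.induced (rankBelow B D k)ᶜ).BFree B v})

/-- The canonical rank of a vertex: the least `n` such that the vertex is assigned rank
`n` in the successive peeling process, and `∞` if it is never assigned a rank. -/
noncomputable def crank {Q : Type*} (B : Set Q) (D : LDAG Q) (v : ℕ × Q) : ℕ∞ :=
  sInf {k : ℕ∞ | ∃ n : ℕ, k = n ∧ v ∈ rankBelow B D (n + 1)}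

end LDAG

/-!
Write `G k` for the subgraph of the vertices not assigned a rank `< k`. An infinite path that
visits `B` infinitely often is never touched by the peeling. Conversely, by Kőnig's argument every
vertex of `G (2i+1)` has a successor in `G (2i+1)`. Hence a vertex of rank `2i+1` starts an infinite
path of vertices of rank `2i+1`, so a nonempty odd rank class has a vertex on every sufficiently
high level, and none of its vertices is tagged. If infinitely many levels have at most `m` untagged
vertices, some class `2i+1` with `i ≤ m` is therefore empty. For this `i`, every vertex of
`G (2i+1)` has a successor there and reaches `B` there, hence is `B`-recurring; all other vertices
have rank at most `2i`.
-/

open Filter Relation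

section Relation

variable {α : Type*}

-- The witness is such that `d a + 1` is the least length of a nonempty path from `a` to `T`.
theorem exists_nat_decreasing_toward (r : α → α → Prop) (T : Set α) :
    ∃ d : α → ℕ, ∀ a, (∃ b ∈ T, TransGen r a b) → ∃ a', r a a' ∧ (a' ∈ T ∨ d a' < d a) := by
  let pre : Set α → Set α := fun X => {a | ∃ b ∈ X, r a b}
  have exists_mem_iterate : ∀ a, (∃ b ∈ T, TransGen r a b) → ∃ k, a ∈ pre^[k + 1] T := by
    rintro a ⟨b, hbT, hab⟩
    induction hab using TransGen.head_induction_on with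
    | single hab => exact ⟨0, b, hbT, hab⟩
    | @head a c hac _ ih =>
      obtain ⟨k, hk⟩ := ih
      exact ⟨k + 1, by rw [Function.iterate_succ_apply']; exact ⟨c, hk, hac⟩⟩
  let d : α → ℕ := fun a => sInf {k | a ∈ pre^[k + 1] T}
  refine ⟨d, fun a ha => ?_⟩
  have mem_iterate_d : a ∈ pre^[d a + 1] T := Nat.sInf_mem (exists_mem_iterate a ha)
  rw [Function.iterate_succ_apply'] at mem_iterate_d
  obtain ⟨a', ha', haa'⟩ := mem_iterate_d
  refine ⟨a', haa', ?_⟩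
  cases hd : d a with
  | zero => exact Or.inl (by simpa only [hd, Function.iterate_zero_apply] using ha')
  | succ k =>
    rw [hd] at ha'
    exact Or.inr (Nat.lt_succ_of_le (Nat.sInf_le ha'))

theorem exists_path_frequently_mem {r : α → α → Prop} {T : Set α} {a : α}
    (h : ∀ b, ReflTransGen r a b → ∃ c ∈ T, TransGen r b c) :
    ∃ p : ℕ → α, p 0 = a ∧ (∀ n, r (p n) (p (n + 1))) ∧ ∃ᶠ n in atTop, p n ∈ T := by
  obtain ⟨d, hd⟩ := exists_nat_decreasing_toward r T
  have exists_next : ∀ b : {b // ReflTransGen r a b}, ∃ c : {c // ReflTransGen r a c},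
      r b c ∧ (c.1 ∈ T ∨ d c < d b) := by
    rintro ⟨b, hab⟩
    obtain ⟨c, hbc, hc⟩ := hd b (h b hab)
    exact ⟨⟨c, hab.tail hbc⟩, hbc, hc⟩
  choose next rel_next mem_or_lt_next using exists_next
  let p : ℕ → {b // ReflTransGen r a b} := fun n => next^[n] ⟨a, .refl⟩
  have p_succ : ∀ n, p (n + 1) = next (p n) := fun n => Function.iterate_succ_apply' next n _
  refine ⟨fun n => p n, rfl, fun n => ?_, ?_⟩
  · simpa only [p_succ] using rel_next (p n)
  · rw [frequently_atTop]
    by_contra! ⟨m, hm⟩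
    refine not_strictAnti_of_wellFoundedLT (fun n => d (p (m + n))) (strictAnti_nat_of_succ_lt ?_)
    intro n
    have notMem : (p (m + n + 1)).1 ∉ T := hm _ (by omega)
    have descent := mem_or_lt_next (p (m + n))
    rw [← p_succ] at descent
    exact descent.resolve_left notMem

end Relation

namespace LDAG

section Path

variable {Q : Type*} {B : Set Q} {D : LDAG Q} {p : ℕ → ℕ × Q} {v w : ℕ × Q}

theorem Desc.mem_V (h : D.Desc v w) (hv : v ∈ D.V) : w ∈ D.V := by
  induction h with
  | refl => exact hv
  | tail _ hE _ => exact (D.edge_mem hE).2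

theorem BFree.of_edge (h : D.BFree B v) (hE : D.E v w) : D.BFree B w :=
  fun x hwx => h x (.head hE hwx)

theorem finitary_of_forall_edge (hfin : {w | D.E v w}.Finite)
    (h : ∀ w, D.E v w → D.Finitary w) : D.Finitary v := by
  refine ((hfin.biUnion h).insert v).subset fun x hvx => ?_
  rcases hvx.cases_head with rfl | ⟨w, hE, hwx⟩
  · exact Set.mem_insert _ _
  · exact Set.mem_insert_of_mem _ (Set.mem_biUnion hE hwx)

theorem desc_of_path (hp : ∀ n, D.E (p n) (p (n + 1))) {m n : ℕ} (hmn : m ≤ n) :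
    D.Desc (p m) (p n) :=
  ReflTransGen.lift p (fun _ _ h => h) m n
    (reflTransGen_of_succ_of_le (fun i j => D.E (p i) (p j)) (fun i _ => hp i) hmn)

theorem injective_of_path (hp : ∀ n, D.E (p n) (p (n + 1))) : Function.Injective p := by
  have level_strictMono : StrictMono fun n => (p n).1 :=
    strictMono_nat_of_lt_succ fun n => by rw [D.edge_level (hp n)]; exact Nat.lt_succ_self _
  exact fun _ _ h => level_strictMono.injective (congrArg Prod.fst h)

theorem not_finitary_of_path (hp : ∀ n, D.E (p n) (p (n + 1))) (m : ℕ) : ¬ D.Finitary (p m) :=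
  Set.infinite_of_injective_forall_mem
    ((injective_of_path hp).comp (add_right_injective m))
    fun n => desc_of_path hp (Nat.le_add_right m n)

theorem not_bFree_of_path (hp : ∀ n, D.E (p n) (p (n + 1)))
    (hB : ∀ m, ∃ n, m ≤ n ∧ (p n).2 ∈ B) (m : ℕ) : ¬ D.BFree B (p m) := by
  obtain ⟨n, hmn, hn⟩ := hB m
  exact fun hfree => hfree _ (desc_of_path hp hmn) hn

theorem bRecurring_of_forall_not_bFree (hE : ∀ v ∈ D.V, ∃ w, D.E v w)
    (hB : ∀ v ∈ D.V, ¬ D.BFree B v) (hv : v ∈ D.V) : D.BRecurring B v := by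
  have reaches_B : ∀ w, ReflTransGen D.E v w → ∃ x ∈ {x : ℕ × Q | x.2 ∈ B}, TransGen D.E w x := by
    intro w hvw
    obtain ⟨w', hww'⟩ := hE w (Desc.mem_V hvw hv)
    have hw' := hB w' (D.edge_mem hww').2
    simp only [BFree, not_forall, not_not] at hw'
    obtain ⟨x, hw'x, hx⟩ := hw'
    exact ⟨x, hx, .head' hww' hw'x⟩
  obtain ⟨p, hp0, hp, hpB⟩ := exists_path_frequently_mem reaches_B
  exact ⟨p, hp0, hp, frequently_atTop.1 hpB⟩

theorem BRecurring.of_induced {S : Set (ℕ × Q)} (h : (D.induced S).BRecurring B v) :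
    D.BRecurring B v := by
  obtain ⟨p, hp0, hp, hpB⟩ := h
  exact ⟨p, hp0, fun n => (hp n).1, hpB⟩

end Path

section Residual

variable {Q : Type*} {B : Set Q} {D : LDAG Q} {v w : ℕ × Q}

/-- The subgraph induced by the vertices that are not assigned a canonical rank `< k`, that is,
what is left of `D` after `k` rounds of peeling. -/
def residual (B : Set Q) (D : LDAG Q) (k : ℕ) : LDAG Q :=
  D.induced (rankBelow B D k)ᶜ

theorem mem_rankBelow_iff_notMem_residual (hv : v ∈ D.V) {k : ℕ} :
    v ∈ rankBelow B D k ↔ v ∉ (residual B D k).V := by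
  simp [residual, induced, hv]

theorem residual_edge_iff {k : ℕ} :
    (residual B D k).E v w ↔ D.E v w ∧ v ∈ (residual B D k).V ∧ w ∈ (residual B D k).V :=
  ⟨fun h => ⟨h.1, (residual B D k).edge_mem h⟩, fun h => ⟨h.1, h.2.1.2, h.2.2.2⟩⟩

theorem mem_residual_zero : v ∈ (residual B D 0).V ↔ v ∈ D.V := by
  simp [residual, induced, rankBelow]

theorem mem_residual_two_mul_add_one {i : ℕ} :
    v ∈ (residual B D (2 * i + 1)).V ↔
      v ∈ (residual B D (2 * i)).V ∧ ¬ (residual B D (2 * i)).Finitary v := by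
  simp only [residual, induced, rankBelow, Nat.mul_mod_right, if_true, Set.mem_inter_iff,
    Set.mem_compl_iff, Set.mem_union, Set.mem_ofPred_eq]
  tauto

theorem mem_residual_two_mul_add_two {i : ℕ} :
    v ∈ (residual B D (2 * i + 2)).V ↔
      v ∈ (residual B D (2 * i + 1)).V ∧ ¬ (residual B D (2 * i + 1)).BFree B v := by
  have odd_mod_two : ¬ (2 * i + 1) % 2 = 0 := by omega
  rw [residual, induced, rankBelow, if_neg odd_mod_two]
  simp only [residual, induced, Set.mem_inter_iff, Set.mem_compl_iff, Set.mem_union,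
    Set.mem_ofPred_eq]
  tauto

theorem rankBelow_mono : Monotone (rankBelow B D) :=
  monotone_nat_of_le_succ fun k => by rw [rankBelow]; exact Set.subset_union_left

theorem residual_antitone : Antitone fun k => (residual B D k).V :=
  fun _ _ h => Set.inter_subset_inter_right _ (Set.compl_subset_compl.2 (rankBelow_mono h))

theorem mem_residual_of_path {p : ℕ → ℕ × Q} (hp : ∀ n, D.E (p n) (p (n + 1)))
    (hB : ∀ m, ∃ n, m ≤ n ∧ (p n).2 ∈ B) (k n : ℕ) : p n ∈ (residual B D k).V := by
  induction k generalizing n with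
  | zero => exact mem_residual_zero.2 (D.edge_mem (hp n)).1
  | succ k ih =>
    have path_residual : ∀ n, (residual B D k).E (p n) (p (n + 1)) :=
      fun n => residual_edge_iff.2 ⟨hp n, ih n, ih (n + 1)⟩
    rcases Nat.even_or_odd' k with ⟨i, rfl | rfl⟩
    · exact mem_residual_two_mul_add_one.2 ⟨ih n, not_finitary_of_path path_residual n⟩
    · exact mem_residual_two_mul_add_two.2 ⟨ih n, not_bFree_of_path path_residual hB n⟩

theorem BRecurring.notMem_rankBelow (h : D.BRecurring B v) (k : ℕ) : v ∉ rankBelow B D k := by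
  obtain ⟨p, rfl, hp, hB⟩ := h
  exact (mem_residual_of_path hp hB k 0).2

theorem exists_edge_residual_odd (hfin : ∀ v, {w | D.E v w}.Finite) {i : ℕ}
    (hv : v ∈ (residual B D (2 * i + 1)).V) : ∃ w, (residual B D (2 * i + 1)).E v w := by
  by_contra! no_edge
  refine (mem_residual_two_mul_add_one.1 hv).2 <|
    finitary_of_forall_edge ((hfin v).subset fun w hvw => hvw.1) fun w hvw => ?_
  by_contra hw
  have hw_mem : w ∈ (residual B D (2 * i + 1)).V :=
    mem_residual_two_mul_add_one.2 ⟨((residual B D (2 * i)).edge_mem hvw).2, hw⟩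
  exact no_edge w (residual_edge_iff.2 ⟨hvw.1, hv, hw_mem⟩)

end Residual

section RankClass

variable {Q : Type*} {B : Set Q} {D : LDAG Q} {v : ℕ × Q}

/-- The set of vertices of canonical rank `k`, as the vertices that the `k`-th round of peeling
removes. -/
def rankClass (B : Set Q) (D : LDAG Q) (k : ℕ) : Set (ℕ × Q) :=
  (residual B D k).V \ (residual B D (k + 1)).V

theorem rankClass_subset_V {k : ℕ} : rankClass B D k ⊆ D.V :=
  fun _ hv => hv.1.1

theorem eq_of_mem_rankClass {j k : ℕ} (hj : v ∈ rankClass B D j) (hk : v ∈ rankClass B D k) :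
    j = k := by
  rcases lt_trichotomy j k with hlt | heq | hlt
  · exact absurd (residual_antitone hlt hk.1) hj.2
  · exact heq
  · exact absurd (residual_antitone hlt hj.1) hk.2

theorem mem_rankClass_odd {i : ℕ} :
    v ∈ rankClass B D (2 * i + 1) ↔
      v ∈ (residual B D (2 * i + 1)).V ∧ (residual B D (2 * i + 1)).BFree B v := by
  rw [rankClass, Set.mem_sdiff, mem_residual_two_mul_add_two]
  tauto

theorem notMem_of_mem_rankClass_odd {i : ℕ} (hv : v ∈ rankClass B D (2 * i + 1)) : v.2 ∉ B :=
  (mem_rankClass_odd.1 hv).2 v .refl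

theorem exists_edge_mem_rankClass_odd (hfin : ∀ v, {w | D.E v w}.Finite) {i : ℕ}
    (hv : v ∈ rankClass B D (2 * i + 1)) : ∃ w ∈ rankClass B D (2 * i + 1), D.E v w := by
  obtain ⟨hv_mem, hv_free⟩ := mem_rankClass_odd.1 hv
  obtain ⟨w, hvw⟩ := exists_edge_residual_odd hfin hv_mem
  exact ⟨w, mem_rankClass_odd.2 ⟨((residual B D _).edge_mem hvw).2, hv_free.of_edge hvw⟩, hvw.1⟩

theorem eventually_exists_mem_rankClass_odd (hfin : ∀ v, {w | D.E v w}.Finite) {i : ℕ}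
    (hne : (rankClass B D (2 * i + 1)).Nonempty) :
    ∀ᶠ l in atTop, ∃ q, (l, q) ∈ rankClass B D (2 * i + 1) := by
  obtain ⟨v, hv⟩ := hne
  filter_upwards [eventually_ge_atTop v.1] with l hl
  induction l, hl using Nat.le_induction with
  | base => exact ⟨v.2, hv⟩
  | succ l _ ih =>
    obtain ⟨q, hq⟩ := ih
    obtain ⟨⟨l', q'⟩, hw, hE⟩ := exists_edge_mem_rankClass_odd hfin hq
    obtain rfl : l' = l + 1 := D.edge_level hE
    exact ⟨q', hw⟩

theorem exists_rankClass_odd_eq_empty (hfin : ∀ v, {w | D.E v w}.Finite) {m : ℕ}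
    (hm : ∃ᶠ l in atTop, {q | (l, q) ∈ D.V ∧ q ∉ B}.encard ≤ m) :
    ∃ i ≤ m, rankClass B D (2 * i + 1) = ∅ := by
  by_contra! hne
  have all_classes_meet : ∀ᶠ l in atTop, ∀ i : Fin (m + 1),
      ∃ q, (l, q) ∈ rankClass B D (2 * i + 1) :=
    eventually_all.2 fun i =>
      eventually_exists_mem_rankClass_odd hfin (hne i (Nat.le_of_lt_succ i.2))
  obtain ⟨l, hl, hcl⟩ := (hm.and_eventually all_classes_meet).exists
  choose g hg using hcl
  have g_injective : Function.Injective g := fun i j hij => by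
    have := eq_of_mem_rankClass (hg i) (hij ▸ hg j)
    omega
  have range_untagged : Set.range g ⊆ {q | (l, q) ∈ D.V ∧ q ∉ B} := by
    rintro _ ⟨i, rfl⟩
    exact ⟨rankClass_subset_V (hg i), notMem_of_mem_rankClass_odd (hg i)⟩
  have too_many : ((m + 1 : ℕ) : ℕ∞) ≤ m := calc
    ((m + 1 : ℕ) : ℕ∞) = (Set.range g).encard := by
      simp [← Set.image_univ, g_injective.encard_image]
    _ ≤ {q | (l, q) ∈ D.V ∧ q ∉ B}.encard := Set.encard_le_encard range_untagged
    _ ≤ m := hl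
  exact absurd (Nat.cast_le.1 too_many) (Nat.not_succ_le_self m)

theorem bRecurring_of_rankClass_odd_eq_empty (hfin : ∀ v, {w | D.E v w}.Finite) {i : ℕ}
    (hi : rankClass B D (2 * i + 1) = ∅) (hv : v ∈ (residual B D (2 * i + 1)).V) :
    D.BRecurring B v := by
  have not_bFree : ∀ w ∈ (residual B D (2 * i + 1)).V, ¬ (residual B D (2 * i + 1)).BFree B w :=
    fun w hw hfree => Set.notMem_empty w (hi ▸ mem_rankClass_odd.2 ⟨hw, hfree⟩)
  exact (bRecurring_of_forall_not_bFree (fun _ => exists_edge_residual_odd hfin) not_bFree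
    hv).of_induced

end RankClass

section Bound

variable {Q : Type*} {B : Set Q} {D : LDAG Q} {v : ℕ × Q}

theorem mem_rankBelow_or_bRecurring (hfin : ∀ v, {w | D.E v w}.Finite) {m : ℕ}
    (hm : ∃ᶠ l in atTop, {q | (l, q) ∈ D.V ∧ q ∉ B}.encard ≤ m) (hv : v ∈ D.V) :
    v ∈ rankBelow B D (2 * m + 1) ∨ D.BRecurring B v := by
  obtain ⟨i, him, hi⟩ := exists_rankClass_odd_eq_empty hfin hm
  by_cases hvi : v ∈ (residual B D (2 * i + 1)).V
  · exact Or.inr (bRecurring_of_rankClass_odd_eq_empty hfin hi hvi)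
  · exact Or.inl (rankBelow_mono (by omega) ((mem_rankBelow_iff_notMem_residual hv).2 hvi))

theorem mem_rankBelow_two_of_empty (hv : v ∈ D.V) : v ∈ rankBelow ∅ D 2 :=
  (mem_rankBelow_iff_notMem_residual hv).2 fun h =>
    (mem_residual_two_mul_add_two (i := 0).1 h).2 fun _ _ => Set.notMem_empty _

theorem finite_edges [Finite Q] (D : LDAG Q) (v : ℕ × Q) : {w | D.E v w}.Finite :=
  ((Set.finite_singleton (v.1 + 1)).prod Set.finite_univ).subset
    fun _ hvw => ⟨D.edge_level hvw, trivial⟩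

-- For nonempty `B`, fewer than `|Q|` states are untagged; this is what keeps the rank `2|Q|` out.
theorem mem_rankBelow_two_mul_card_or_bRecurring [Fintype Q] (hv : v ∈ D.V) :
    v ∈ rankBelow B D (2 * Fintype.card Q) ∨ D.BRecurring B v := by
  rcases B.eq_empty_or_nonempty with rfl | hB
  · have card_pos : 0 < Fintype.card Q := Fintype.card_pos_iff.2 ⟨v.2⟩
    exact Or.inl (rankBelow_mono (by omega) (mem_rankBelow_two_of_empty hv))
  · have card_untagged_lt : Bᶜ.ncard < Fintype.card Q := by
      rw [← Nat.card_eq_fintype_card]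
      exact Set.ncard_lt_card (Set.compl_ne_univ.2 hB)
    have level_bound : ∀ l, {q | (l, q) ∈ D.V ∧ q ∉ B}.encard ≤ Bᶜ.ncard := fun l => by
      rw [Bᶜ.toFinite.cast_ncard_eq]
      exact Set.encard_le_encard fun q hq => hq.2
    exact (mem_rankBelow_or_bRecurring D.finite_edges (.of_forall level_bound) hv).imp_left
      fun h => rankBelow_mono (by omega) h

theorem crank_lt_of_mem_rankBelow {k : ℕ} (h : v ∈ rankBelow B D k) : crank B D v < k := by
  cases k with
  | zero => exact absurd h (Set.notMem_empty v)
  | succ k =>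
    have crank_le : crank B D v ≤ k := sInf_le ⟨k, rfl, h⟩
    exact crank_le.trans_lt (Nat.cast_lt.2 k.lt_succ_self)

theorem BRecurring.crank_eq_top (h : D.BRecurring B v) : crank B D v = ⊤ := by
  rw [crank, sInf_eq_top]
  rintro _ ⟨n, rfl, hn⟩
  exact absurd hn (h.notMem_rankBelow _)

end Bound

end LDAG

theorem crank_runDAG_general {Q : Type*} [Fintype Q] (D : LDAG Q) (B : Set Q) {v : ℕ × Q}
    (hv : v ∈ D.V) :
    (LDAG.crank B D v < (2 * Fintype.card Q : ℕ) ∨ LDAG.crank B D v = ⊤) ∧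
      (LDAG.crank B D v = ⊤ ↔ D.BRecurring B v) := by
  rcases LDAG.mem_rankBelow_two_mul_card_or_bRecurring (B := B) hv with hbelow | hrec
  · have crank_lt := LDAG.crank_lt_of_mem_rankBelow hbelow
    exact ⟨Or.inl crank_lt, fun htop => absurd htop crank_lt.ne_top, fun h => h.crank_eq_top⟩
  · exact ⟨Or.inr hrec.crank_eq_top, fun _ => hrec, fun _ => hrec.crank_eq_top⟩

/-- for a Büchi automaton `(Q, Δ, B)` with `n` states and the canonical
rank function `c` of the run DAG on an ω-word `u`, every vertex `v` satisfies
`c v < 2n` or `c v = ∞`, and `c v = ∞` iff `v` is `B`-recurring. -/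
theorem crank_runDAG {Q A : Type*} [Fintype Q] (Δ : Set (Q × A × Q)) (B : Set Q)
    (u : ℕ → A) (v : ℕ × Q) :
    (LDAG.crank B (runDAG Δ u) v < (2 * Fintype.card Q : ℕ) ∨
      LDAG.crank B (runDAG Δ u) v = ⊤) ∧
    (LDAG.crank B (runDAG Δ u) v = ⊤ ↔ (runDAG Δ u).BRecurring B v) :=
  crank_runDAG_general (runDAG Δ u) B (Set.mem_univ v)
end

section
/- There exists a constant C > 0 such that for every alphabet A and every nondeterministic Büchi automaton over A with n ≥ 1 states and initial state set I, there exists a backward deterministic automaton over A with a generalized transition Büchi recurrence condition and at most C · (2n(n+1))^n states which, augmented with a suitable set of initial states, recognizes the same ω-language. -/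
/-- A (backward) run of a backward deterministic automaton with transition function `ρ`
on the ω-word `u`: `r i = ρ (u i) (r (i+1))` for all `i`. -/
def IsBackRun {P A : Type*} (ρ : A → P → P) (u : ℕ → A) (r : ℕ → P) : Prop :=
  ∀ i, r i = ρ (u i) (r (i + 1))

/-- A run is final for the generalized transition Büchi condition `T` if for every `j`
the run uses a transition from `T j` infinitely often. -/
def GTBFinal {P A : Type*} {k : ℕ} (T : Fin k → Set (P × A × P)) (u : ℕ → A)
    (r : ℕ → P) : Prop :=
  ∀ j : Fin k, ∀ m : ℕ, ∃ i, m ≤ i ∧ (r i, u i, r (i + 1)) ∈ T j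

/-- The ω-word `u` is accepted by the nondeterministic Büchi automaton with transition
relation `Δ` and Büchi set `B` from state `q`: there is a run starting in `q` that
visits `B` infinitely often. -/
def NBAAccepts {Q A : Type*} (Δ : Set (Q × A × Q)) (B : Set Q) (u : ℕ → A) (q : Q) :
    Prop :=
  ∃ r : ℕ → Q, r 0 = q ∧ (∀ i, (r i, u i, r (i + 1)) ∈ Δ) ∧
    ∀ m, ∃ i, m ≤ i ∧ r i ∈ B

/-!
Unfold the Büchi automaton along an ω-word `u` into a layered graph. Starting from all states,
apply alternately `X ↦ EG X` and `X ↦ EF (B ∧ X)`. A state that survives `2n + 1` such rounds is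
accepting: otherwise each of `n + 1` nested differences of consecutive levels is nonempty at all
late layers, which needs `n + 1` distinct states. Hence the rank of a state, the last level
`≤ 2n + 1` it belongs to, decides acceptance.

The ranks of a layer are a function of those of the next layer, but this backward recurrence has
spurious solutions, since it does not see which eventualities are postponed forever. A solution is
the true one exactly if an alternating reachability game played inside the sets of constant rank is
won everywhere. The delays of that game also satisfy a backward recurrence, which only depends on
their order type, so a state of the automaton stores for every `q` one of `2n + 2` ranks and one of
`n` positions in the order of delays. The game is won everywhere iff infinitely often the delays of
a layer do not exceed the maximal delay of the next layer: finite maxima cannot decrease forever,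
whereas each such layer adds a new value on the states where the game is not won.
-/

namespace BackwardDet

open Filter Finset

section OrderRank

variable {Q α β : Type*} [Fintype Q] [LinearOrder α] [LinearOrder β]

/-- The number of elements on which `f` is strictly smaller: the order type of `f`, coded by
numbers below `Fintype.card Q`. -/
def orderRank (f : Q → α) (q : Q) : ℕ := #{x | f x < f q}

theorem orderRank_lt_card (f : Q → α) (q : Q) : orderRank f q < Fintype.card Q :=
  card_lt_univ_of_notMem (x := q) (by simp)

theorem orderRank_lt_orderRank {f : Q → α} {x y : Q} (h : f x < f y) :
    orderRank f x < orderRank f y :=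
  card_lt_card <| ssubset_iff_of_subset (monotone_filter_right _ fun _ _ hz => hz.trans h) |>.2
    ⟨x, by simpa using h, by simp⟩

theorem orderRank_le_orderRank {f : Q → α} {x y : Q} :
    orderRank f x ≤ orderRank f y ↔ f x ≤ f y where
  mp := by
    contrapose!
    exact orderRank_lt_orderRank
  mpr h := card_le_card (monotone_filter_right _ fun _ _ hz => hz.trans_le h)

theorem orderRank_congr {f : Q → α} {g : Q → β} (h : ∀ x y, f x ≤ f y ↔ g x ≤ g y) :
    orderRank f = orderRank g := by
  funext q
  simp only [orderRank, ← not_le, h]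

theorem card_image_orderRank_le (f : Q → α) (s : Finset Q) :
    #(s.image (orderRank f)) ≤ #(s.image f) := by
  have hcomp : orderRank f = (fun v => #{x | f x < v}) ∘ f := rfl
  rw [hcomp, ← image_image]
  exact card_image_le

end OrderRank

section Delay

/-- One layer of an alternating reachability game played on `ℕ × Q`, in which every move goes from
layer `i` to layer `i + 1`: at a state of `universal` all moves have to succeed, elsewhere one. -/
structure ReachLayer (Q : Type*) where
  target : Set Q
  move : Q → Set Q
  universal : Set Q
  move_nonempty : ∀ q ∉ target, (move q).Nonempty

variable {Q : Type*}

namespace ReachLayer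

variable (L : ReachLayer Q) {f g : Q → ℕ} {q y : Q}

/-- `y` is a best move at `q` when `f` estimates the remaining delay: it maximises `f` at
universal states and minimises it elsewhere. -/
def IsOptimalMove (f : Q → ℕ) (q y : Q) : Prop :=
  y ∈ L.move q ∧ ((q ∈ L.universal ∧ ∀ z ∈ L.move q, f z ≤ f y) ∨
    (q ∉ L.universal ∧ ∀ z ∈ L.move q, f y ≤ f z))

open scoped Classical in
/-- The delay of a state of this layer, computed from the delays `f` of the next layer. -/
noncomputable def delayStep (f : Q → ℕ) (q : Q) : ℕ :=
  if q ∈ L.target then 0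
  else if q ∈ L.universal then sSup (f '' L.move q) + 1
  else sInf (f '' L.move q) + 1

/-- No delay computed from `f` exceeds the maximum of `f`. -/
def StepLeMax (f : Q → ℕ) : Prop := ∀ q, ∃ z, L.delayStep f q ≤ f z

variable {L}

theorem delayStep_of_mem_target (hq : q ∈ L.target) : L.delayStep f q = 0 := if_pos hq

theorem IsOptimalMove.delayStep_eq (hy : L.IsOptimalMove f q y) (hq : q ∉ L.target) :
    L.delayStep f q = f y + 1 := by
  have hfy : f y ∈ f '' L.move q := ⟨y, hy.1, rfl⟩
  rw [delayStep, if_neg hq]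
  rcases hy.2 with ⟨hu, hmax⟩ | ⟨hu, hmin⟩
  · rw [if_pos hu, IsGreatest.csSup_eq ⟨hfy, Set.forall_mem_image.2 hmax⟩]
  · rw [if_neg hu, IsLeast.csInf_eq ⟨hfy, Set.forall_mem_image.2 hmin⟩]

theorem IsOptimalMove.congr (h : ∀ x y, f x ≤ f y ↔ g x ≤ g y) (hy : L.IsOptimalMove f q y) :
    L.IsOptimalMove g q y := by
  simpa only [IsOptimalMove, h] using hy

theorem exists_isOptimalMove [Finite Q] (f : Q → ℕ) (hq : q ∉ L.target) :
    ∃ y, L.IsOptimalMove f q y := by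
  by_cases hu : q ∈ L.universal
  · obtain ⟨y, hy, hmax⟩ :=
      Set.exists_max_image _ f (L.move q).toFinite (L.move_nonempty q hq)
    exact ⟨y, hy, .inl ⟨hu, hmax⟩⟩
  · obtain ⟨y, hy, hmin⟩ :=
      Set.exists_min_image _ f (L.move q).toFinite (L.move_nonempty q hq)
    exact ⟨y, hy, .inr ⟨hu, hmin⟩⟩

theorem delayStep_le_delayStep_congr [Finite Q] (h : ∀ x y, f x ≤ f y ↔ g x ≤ g y) (x y : Q) :
    L.delayStep f x ≤ L.delayStep f y ↔ L.delayStep g x ≤ L.delayStep g y := by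
  by_cases hx : x ∈ L.target
  · simp only [delayStep_of_mem_target hx, Nat.zero_le]
  obtain ⟨x', hx'⟩ := L.exists_isOptimalMove f hx
  rw [hx'.delayStep_eq hx, (hx'.congr h).delayStep_eq hx]
  by_cases hy : y ∈ L.target
  · simp only [delayStep_of_mem_target hy, Nat.le_zero, Nat.succ_ne_zero]
  obtain ⟨y', hy'⟩ := L.exists_isOptimalMove f hy
  rw [hy'.delayStep_eq hy, (hy'.congr h).delayStep_eq hy]
  simpa only [Nat.add_le_add_iff_right] using h x' y'

theorem StepLeMax.congr [Finite Q] (h : ∀ x y, f x ≤ f y ↔ g x ≤ g y) (hf : L.StepLeMax f) :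
    L.StepLeMax g := by
  intro q
  by_cases hq : q ∈ L.target
  · exact ⟨q, by simp only [delayStep_of_mem_target hq, Nat.zero_le]⟩
  obtain ⟨y, hy⟩ := L.exists_isOptimalMove f hq
  obtain ⟨z, hz⟩ := hf q
  refine ⟨z, ?_⟩
  rw [hy.delayStep_eq hq] at hz
  rw [(hy.congr h).delayStep_eq hq, Nat.succ_le_iff, ← not_le, ← h, not_le]
  exact hz

end ReachLayer

/-- `Within L t i q`: from state `q` of layer `i`, a target can be forced within `t` moves. -/
inductive Within (L : ℕ → ReachLayer Q) : ℕ → ℕ → Q → Prop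
  | target {t i q} : q ∈ (L i).target → Within L t i q
  | universal {t i q} : q ∈ (L i).universal → (∀ z ∈ (L i).move q, Within L t (i + 1) z) →
      Within L (t + 1) i q
  | existential {t i q z} : q ∉ (L i).universal → z ∈ (L i).move q → Within L t (i + 1) z →
      Within L (t + 1) i q

/-- A target can be forced within a bounded number of moves. -/
def Resolves (L : ℕ → ReachLayer Q) (i : ℕ) (q : Q) : Prop := ∃ t, Within L t i q

/-- The number of moves needed to force a target; the junk value `0` is taken at states from which
no target can be forced. -/
noncomputable def delay (L : ℕ → ReachLayer Q) (i : ℕ) (q : Q) : ℕ := sInf {t | Within L t i q}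

/-- `e` satisfies the backward recurrence that the order types of the delays satisfy. -/
def IsDelayRanking [Fintype Q] (L : ℕ → ReachLayer Q) (e : ℕ → Q → ℕ) : Prop :=
  ∀ i, e i = orderRank ((L i).delayStep (e (i + 1)))

variable {L : ℕ → ReachLayer Q} {e : ℕ → Q → ℕ} {s t i : ℕ} {q q' y : Q}

theorem Within.mono (h : Within L s i q) (hst : s ≤ t) : Within L t i q := by
  induction h generalizing t with
  | target hq => exact .target hq
  | universal hu _ ih =>
    obtain ⟨t, rfl⟩ := Nat.exists_eq_add_one.2 (Nat.zero_lt_of_lt hst)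
    exact .universal hu fun z hz => ih z hz (Nat.le_of_succ_le_succ hst)
  | existential hu hz _ ih =>
    obtain ⟨t, rfl⟩ := Nat.exists_eq_add_one.2 (Nat.zero_lt_of_lt hst)
    exact .existential hu hz (ih (Nat.le_of_succ_le_succ hst))

theorem within_zero_iff : Within L 0 i q ↔ q ∈ (L i).target :=
  ⟨fun | .target hq => hq, .target⟩

theorem within_succ_iff_of_isOptimalMove {f : Q → ℕ} (hq : q ∉ (L i).target)
    (hy : (L i).IsOptimalMove f q y)
    (hf : ∀ z z', f z ≤ f z' → Within L t (i + 1) z' → Within L t (i + 1) z) :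
    Within L (t + 1) i q ↔ Within L t (i + 1) y := by
  obtain ⟨hmove, ⟨hu, hmax⟩ | ⟨hu, hmin⟩⟩ := hy
  · refine ⟨fun h => ?_, fun h => .universal hu fun z hz => hf z y (hmax z hz) h⟩
    cases h with
    | target h => exact absurd h hq
    | universal _ h => exact h y hmove
    | existential h => exact absurd hu h
  · refine ⟨fun h => ?_, .existential hu hmove⟩
    cases h with
    | target h => exact absurd h hq
    | universal h => exact absurd h hu
    | existential _ hz h => exact hf _ _ (hmin _ hz) h

theorem Resolves.of_universal [Finite Q] (hu : q ∈ (L i).universal)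
    (h : ∀ z ∈ (L i).move q, Resolves L (i + 1) z) : Resolves L i q := by
  choose! t ht using h
  obtain ⟨s, hs⟩ := (Set.finite_range t).bddAbove
  exact ⟨s + 1, .universal hu fun z hz => (ht z hz).mono (hs ⟨z, rfl⟩)⟩

theorem Resolves.of_existential {z : Q} (hu : q ∉ (L i).universal) (hz : z ∈ (L i).move q)
    (h : Resolves L (i + 1) z) : Resolves L i q :=
  let ⟨t, ht⟩ := h
  ⟨t + 1, .existential hu hz ht⟩

theorem within_iff_delay_le (h : Resolves L i q) : Within L t i q ↔ delay L i q ≤ t :=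
  ⟨fun ht => Nat.sInf_le ht, fun ht => (Nat.sInf_mem h).mono ht⟩

theorem delay_eq_delayStep [Finite Q] (h : ∀ i q, Resolves L i q) (i : ℕ) :
    delay L i = (L i).delayStep (delay L (i + 1)) := by
  funext q
  by_cases hq : q ∈ (L i).target
  · rw [ReachLayer.delayStep_of_mem_target hq]
    exact Nat.le_zero.1 ((within_iff_delay_le (h i q)).1 (.target hq))
  obtain ⟨y, hy⟩ := (L i).exists_isOptimalMove (delay L (i + 1)) hq
  rw [hy.delayStep_eq hq]
  have hpos : ¬ delay L i q ≤ 0 := by rwa [← within_iff_delay_le (h i q), within_zero_iff]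
  have hsucc (t : ℕ) : delay L i q ≤ t + 1 ↔ delay L (i + 1) y ≤ t := by
    simp only [← within_iff_delay_le (h _ _)]
    refine within_succ_iff_of_isOptimalMove hq hy fun z z' hzz' => ?_
    simpa only [within_iff_delay_le (h _ _)] using hzz'.trans
  have hle := (hsucc (delay L (i + 1) y)).2 le_rfl
  have hge := (hsucc (delay L i q - 1)).1 (by omega)
  omega

section Fintype

variable [Fintype Q]

theorem isDelayRanking_orderRank_delay (h : ∀ i q, Resolves L i q) :
    IsDelayRanking L fun i => orderRank (delay L i) := by
  intro i
  refine orderRank_congr fun x y => ?_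
  rw [delay_eq_delayStep h i]
  exact ReachLayer.delayStep_le_delayStep_congr (fun _ _ => orderRank_le_orderRank.symm) x y

theorem frequently_stepLeMax_orderRank_delay (h : ∀ i q, Resolves L i q) :
    ∃ᶠ i in atTop, (L i).StepLeMax (orderRank (delay L (i + 1))) := by
  by_contra hcon
  simp only [not_frequently, eventually_atTop] at hcon
  obtain ⟨m, hm⟩ := hcon
  have sup_delay_lt (k : ℕ) : univ.sup (delay L (m + (k + 1))) < univ.sup (delay L (m + k)) := by
    have hk : ¬ (L (m + k)).StepLeMax (delay L (m + k + 1)) := fun hk =>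
      hm _ (Nat.le_add_right m k) (hk.congr fun _ _ => orderRank_le_orderRank.symm)
    simp only [ReachLayer.StepLeMax, ← delay_eq_delayStep h, not_forall, not_exists, not_le] at hk
    obtain ⟨q, hq⟩ := hk
    calc univ.sup (delay L (m + (k + 1)))
      _ < delay L (m + k) q := (Finset.sup_lt_iff (Nat.zero_lt_of_lt (hq q))).2 fun z _ => hq z
      _ ≤ univ.sup (delay L (m + k)) := le_sup (f := delay L (m + k)) (mem_univ q)
  exact not_strictAnti_of_wellFoundedLT (fun k => univ.sup (delay L (m + k)))
    (strictAnti_nat_of_succ_lt sup_delay_lt)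

theorem IsDelayRanking.le_iff (he : IsDelayRanking L e) :
    e i q ≤ e i q' ↔ (L i).delayStep (e (i + 1)) q ≤ (L i).delayStep (e (i + 1)) q' := by
  rw [he i, orderRank_le_orderRank]

theorem IsDelayRanking.within_of_le (he : IsDelayRanking L e) (hle : e i q ≤ e i q')
    (h : Within L t i q') : Within L t i q := by
  induction t generalizing i q q' with
  | zero =>
    rw [within_zero_iff] at h ⊢
    rw [he.le_iff, ReachLayer.delayStep_of_mem_target h] at hle
    by_contra hq
    obtain ⟨y, hy⟩ := (L i).exists_isOptimalMove (e (i + 1)) hq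
    rw [hy.delayStep_eq hq] at hle
    omega
  | succ t ih =>
    by_cases hq : q ∈ (L i).target
    · exact .target hq
    obtain ⟨y, hy⟩ := (L i).exists_isOptimalMove (e (i + 1)) hq
    rw [he.le_iff, hy.delayStep_eq hq] at hle
    by_cases hq' : q' ∈ (L i).target
    · rw [ReachLayer.delayStep_of_mem_target hq'] at hle
      omega
    obtain ⟨y', hy'⟩ := (L i).exists_isOptimalMove (e (i + 1)) hq'
    rw [hy'.delayStep_eq hq'] at hle
    rw [within_succ_iff_of_isOptimalMove hq' hy' fun _ _ => ih] at h
    rw [within_succ_iff_of_isOptimalMove hq hy fun _ _ => ih]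
    exact ih (Nat.le_of_succ_le_succ hle) h

theorem IsDelayRanking.exists_within_lt (he : IsDelayRanking L e) (hlt : e i q < e i q')
    (h : Within L t i q') : ∃ s < t, Within L s i q := by
  induction t generalizing i q q' with
  | zero =>
    rw [within_zero_iff] at h
    rw [← not_le, he.le_iff, ReachLayer.delayStep_of_mem_target h] at hlt
    omega
  | succ t ih =>
    refine ⟨t, t.lt_succ_self, ?_⟩
    by_cases hq : q ∈ (L i).target
    · exact .target hq
    obtain ⟨y, hy⟩ := (L i).exists_isOptimalMove (e (i + 1)) hq
    rw [← not_le, he.le_iff, hy.delayStep_eq hq, not_le] at hlt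
    by_cases hq' : q' ∈ (L i).target
    · rw [ReachLayer.delayStep_of_mem_target hq'] at hlt
      omega
    obtain ⟨y', hy'⟩ := (L i).exists_isOptimalMove (e (i + 1)) hq'
    rw [hy'.delayStep_eq hq'] at hlt
    rw [within_succ_iff_of_isOptimalMove hq' hy' fun _ _ => he.within_of_le] at h
    obtain ⟨s, hst, hs⟩ := ih (Nat.lt_of_succ_lt_succ hlt) h
    exact ((within_succ_iff_of_isOptimalMove hq hy fun _ _ => he.within_of_le).2 hs).mono hst

theorem IsDelayRanking.le_iff_delay_le (he : IsDelayRanking L e) (h : ∀ i q, Resolves L i q) :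
    e i q ≤ e i q' ↔ delay L i q ≤ delay L i q' := by
  constructor
  · intro hle
    rw [← within_iff_delay_le (h i q)]
    exact he.within_of_le hle ((within_iff_delay_le (h i q')).2 le_rfl)
  · contrapose!
    intro hlt
    obtain ⟨s, hs, hwithin⟩ :=
      he.exists_within_lt hlt ((within_iff_delay_le (h i q)).2 le_rfl)
    exact ((within_iff_delay_le (h i q')).1 hwithin).trans_lt hs

open scoped Classical in
/-- The states of layer `i` from which no target can be forced. -/
noncomputable def stuck (L : ℕ → ReachLayer Q) (i : ℕ) : Finset Q := {q | ¬ Resolves L i q}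

theorem mem_stuck : q ∈ stuck L i ↔ ¬ Resolves L i q := by simp [stuck]

theorem IsDelayRanking.mem_stuck_of_le (he : IsDelayRanking L e) (hq : q ∈ stuck L i)
    (hle : e i q ≤ e i q') : q' ∈ stuck L i := by
  rw [mem_stuck] at hq ⊢
  exact fun ⟨t, ht⟩ => hq ⟨t, he.within_of_le hle ht⟩

theorem IsDelayRanking.exists_mem_stuck_succ (he : IsDelayRanking L e) (hq : q ∈ stuck L i) :
    ∃ y ∈ stuck L (i + 1), (L i).delayStep (e (i + 1)) q = e (i + 1) y + 1 := by
  rw [mem_stuck] at hq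
  have htarget : q ∉ (L i).target := fun h => hq ⟨0, .target h⟩
  obtain ⟨y, hy⟩ := (L i).exists_isOptimalMove (e (i + 1)) htarget
  refine ⟨y, mem_stuck.2 fun ⟨t, ht⟩ => hq ⟨t + 1, ?_⟩, hy.delayStep_eq htarget⟩
  exact (within_succ_iff_of_isOptimalMove htarget hy fun _ _ => he.within_of_le).2 ht

theorem IsDelayRanking.image_delayStep_stuck_subset (he : IsDelayRanking L e) (i : ℕ) :
    (stuck L i).image ((L i).delayStep (e (i + 1))) ⊆
      ((stuck L (i + 1)).image (e (i + 1))).image Nat.succ := by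
  simp only [image_subset_iff, image_image]
  intro q hq
  obtain ⟨y, hy, hstep⟩ := he.exists_mem_stuck_succ hq
  exact mem_image.2 ⟨y, hy, hstep.symm⟩

theorem IsDelayRanking.monotone_card_image_stuck (he : IsDelayRanking L e) :
    Monotone fun i => #((stuck L i).image (e i)) := by
  refine monotone_nat_of_le_succ fun i => ?_
  calc #((stuck L i).image (e i))
    _ ≤ #((stuck L i).image ((L i).delayStep (e (i + 1)))) := he i ▸ card_image_orderRank_le _ _
    _ ≤ #(((stuck L (i + 1)).image (e (i + 1))).image Nat.succ) :=
      card_le_card (he.image_delayStep_stuck_subset i)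
    _ = #((stuck L (i + 1)).image (e (i + 1))) := card_image_of_injective _ Nat.succ_injective

theorem IsDelayRanking.card_image_stuck_lt_succ (he : IsDelayRanking L e)
    (hstuck : (stuck L (i + 1)).Nonempty) (hmax : (L i).StepLeMax (e (i + 1))) :
    #((stuck L i).image (e i)) < #((stuck L (i + 1)).image (e (i + 1))) := by
  obtain ⟨x, hx⟩ := hstuck
  obtain ⟨top, -, htop⟩ := exists_max_image univ (e (i + 1)) ⟨x, mem_univ x⟩
  have htop_mem : top ∈ stuck L (i + 1) := he.mem_stuck_of_le hx (htop x (mem_univ x))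
  have hssubset : (stuck L i).image ((L i).delayStep (e (i + 1))) ⊂
      ((stuck L (i + 1)).image (e (i + 1))).image Nat.succ := by
    refine ssubset_iff_of_subset (he.image_delayStep_stuck_subset i) |>.2
      ⟨e (i + 1) top + 1, mem_image_of_mem _ (mem_image_of_mem _ htop_mem), ?_⟩
    simp only [mem_image, not_exists, not_and]
    intro q _ hq
    obtain ⟨z, hz⟩ := hmax q
    have hz_le := htop z (mem_univ z)
    omega
  calc #((stuck L i).image (e i))
    _ ≤ #((stuck L i).image ((L i).delayStep (e (i + 1)))) := he i ▸ card_image_orderRank_le _ _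
    _ < #(((stuck L (i + 1)).image (e (i + 1))).image Nat.succ) := card_lt_card hssubset
    _ = #((stuck L (i + 1)).image (e (i + 1))) := card_image_of_injective _ Nat.succ_injective

/-- The number of values that `e` takes on stuck states never decreases in time and grows at every
layer satisfying `StepLeMax`, so it would exceed `Fintype.card Q`. -/
theorem IsDelayRanking.resolves (he : IsDelayRanking L e)
    (hmax : ∃ᶠ i in atTop, (L i).StepLeMax (e (i + 1))) (i : ℕ) (q : Q) : Resolves L i q := by
  by_contra hq
  let numValues (j : ℕ) : ℕ := #((stuck L j).image (e j))
  have numValues_mono : Monotone numValues := he.monotone_card_image_stuck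
  have stuck_nonempty {j : ℕ} (hij : i ≤ j) : (stuck L j).Nonempty := by
    have hi : 0 < numValues i := card_pos.2 (.image ⟨q, mem_stuck.2 hq⟩ _)
    exact image_nonempty.1 (card_pos.1 (hi.trans_le (numValues_mono hij)))
  have numValues_bdd : BddAbove (Set.range numValues) :=
    ⟨Fintype.card Q, Set.forall_mem_range.2 fun j => card_image_le.trans (card_le_univ _)⟩
  obtain ⟨j, hj⟩ := Nat.sSup_mem (Set.range_nonempty numValues) numValues_bdd
  obtain ⟨k, hk, hmaxk⟩ := frequently_atTop.1 hmax (max i j)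
  have hlt : numValues k < numValues (k + 1) :=
    he.card_image_stuck_lt_succ (stuck_nonempty (by omega)) hmaxk
  have hle : numValues (k + 1) ≤ numValues j := hj ▸ le_csSup numValues_bdd ⟨k + 1, rfl⟩
  have hjk : numValues j ≤ numValues k := numValues_mono (le_of_max_le_right hk)
  omega

theorem isDelayRanking_and_frequently_stepLeMax_iff :
    (IsDelayRanking L e ∧ ∃ᶠ i in atTop, (L i).StepLeMax (e (i + 1))) ↔
      (∀ i q, Resolves L i q) ∧ e = fun i => orderRank (delay L i) := by
  constructor
  · rintro ⟨he, hmax⟩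
    have h := he.resolves hmax
    refine ⟨h, funext fun i => ?_⟩
    rw [he i]
    exact orderRank_congr fun x y => he.le_iff.symm.trans (he.le_iff_delay_le h)
  · rintro ⟨h, rfl⟩
    exact ⟨isDelayRanking_orderRank_delay h, frequently_stepLeMax_orderRank_delay h⟩

end Fintype

end Delay

section Levels

variable {Q : Type*}

/-- `EG X` in the sense of CTL, for the layered graph with edges `E i` from layer `i` to layer
`i + 1`: some infinite path stays in `X`. It is encoded as a greatest fixed point. -/
def ExistsGlobally (E : ℕ → Q → Q → Prop) (X : ℕ → Q → Prop) (i : ℕ) (q : Q) : Prop :=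
  ∃ Y : ℕ → Q → Prop, Y i q ∧ ∀ j z, Y j z → X j z ∧ ∃ w, E j z w ∧ Y (j + 1) w

/-- `ReachesIn E X t i q`: some path of length `t` leads from state `q` of layer `i` to `X`. -/
inductive ReachesIn (E : ℕ → Q → Q → Prop) (X : ℕ → Q → Prop) : ℕ → ℕ → Q → Prop
  | zero {i q} : X i q → ReachesIn E X 0 i q
  | succ {t i q w} : E i q w → ReachesIn E X t (i + 1) w → ReachesIn E X (t + 1) i q

/-- `EF X` in the sense of CTL: some path leads to `X`. -/
def ExistsEventually (E : ℕ → Q → Q → Prop) (X : ℕ → Q → Prop) (i : ℕ) (q : Q) : Prop :=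
  ∃ t, ReachesIn E X t i q

/-- The approximations of acceptance: the sets obtained from everything by applying
alternately `X ↦ EG X` and `X ↦ EF (B ∧ X)`. -/
def Level (E : ℕ → Q → Q → Prop) (B : Set Q) : ℕ → ℕ → Q → Prop
  | 0 => fun _ _ => True
  | m + 1 =>
    if Even m then ExistsGlobally E (Level E B m)
    else ExistsEventually E fun i q => q ∈ B ∧ Level E B m i q

/-- Some infinite path from state `q` of layer `i` visits `B` infinitely often. -/
def AcceptsFrom (E : ℕ → Q → Q → Prop) (B : Set Q) (i : ℕ) (q : Q) : Prop :=
  ∃ p : ℕ → Q, p 0 = q ∧ (∀ k, E (i + k) (p k) (p (k + 1))) ∧ ∃ᶠ k in atTop, p k ∈ B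

variable {E : ℕ → Q → Q → Prop} {B : Set Q} {X Y : ℕ → Q → Prop} {m m' t i : ℕ} {q w : Q}

theorem ExistsGlobally.exists_succ (h : ExistsGlobally E X i q) :
    X i q ∧ ∃ w, E i q w ∧ ExistsGlobally E X (i + 1) w := by
  obtain ⟨Y, hq, hY⟩ := h
  obtain ⟨hX, w, hw, hYw⟩ := hY i q hq
  exact ⟨hX, w, hw, Y, hYw, hY⟩

theorem ExistsGlobally.of_succ (hX : X i q) (hw : E i q w) (h : ExistsGlobally E X (i + 1) w) :
    ExistsGlobally E X i q := by
  refine ⟨fun j z => (j = i ∧ z = q) ∨ ExistsGlobally E X j z, .inl ⟨rfl, rfl⟩, ?_⟩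
  rintro j z (⟨rfl, rfl⟩ | hz)
  · exact ⟨hX, w, hw, .inr h⟩
  · obtain ⟨hXz, v, hv, hvX⟩ := hz.exists_succ
    exact ⟨hXz, v, hv, .inr hvX⟩

theorem ExistsEventually.of_mem (h : X i q) : ExistsEventually E X i q := ⟨0, .zero h⟩

theorem ExistsEventually.of_succ (hw : E i q w) (h : ExistsEventually E X (i + 1) w) :
    ExistsEventually E X i q :=
  let ⟨t, ht⟩ := h
  ⟨t + 1, .succ hw ht⟩

theorem existsEventually_iff :
    ExistsEventually E X i q ↔ X i q ∨ ∃ w, E i q w ∧ ExistsEventually E X (i + 1) w := by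
  constructor
  · rintro ⟨t, ht⟩
    cases ht with
    | zero h => exact .inl h
    | succ hw h => exact .inr ⟨_, hw, _, h⟩
  · rintro (h | ⟨w, hw, h⟩)
    exacts [.of_mem h, .of_succ hw h]

theorem ExistsEventually.le_of_closed (hXY : ∀ i q, X i q → Y i q)
    (hY : ∀ i q w, E i q w → Y (i + 1) w → Y i q) (h : ExistsEventually E X i q) : Y i q := by
  obtain ⟨t, ht⟩ := h
  induction ht with
  | zero hX => exact hXY _ _ hX
  | succ hw _ ih => exact hY _ _ _ hw ih

theorem level_succ_of_even (hm : Even m) :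
    Level E B (m + 1) = ExistsGlobally E (Level E B m) := by
  rw [Level, if_pos hm]

theorem level_succ_of_odd (hm : Odd m) :
    Level E B (m + 1) = ExistsEventually E fun i q => q ∈ B ∧ Level E B m i q := by
  rw [Level, if_neg (Nat.not_even_iff_odd.2 hm)]

theorem Level.of_succ (hw : E i q w) (h : Level E B m (i + 1) w) : Level E B m i q := by
  induction m generalizing i q w with
  | zero => trivial
  | succ m ih =>
    rcases m.even_or_odd with hm | hm
    · rw [level_succ_of_even hm] at h ⊢
      exact .of_succ (ih hw h.exists_succ.1) hw h
    · rw [level_succ_of_odd hm] at h ⊢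
      exact .of_succ hw h

theorem Level.of_le (h : Level E B m' i q) (hm : m ≤ m') : Level E B m i q := by
  induction hm with
  | refl => exact h
  | @step m' _ ih =>
    apply ih
    rcases m'.even_or_odd with hm' | hm'
    · rw [level_succ_of_even hm'] at h
      exact h.exists_succ.1
    · rw [level_succ_of_odd hm'] at h
      exact h.le_of_closed (fun _ _ hX => hX.2) fun _ _ _ => .of_succ

theorem level_succ_iff_of_even (hm : Even m) :
    Level E B (m + 1) i q ↔ ∃ w, E i q w ∧ Level E B (m + 1) (i + 1) w := by
  refine ⟨fun h => ?_, fun ⟨w, hw, h⟩ => .of_succ hw h⟩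
  rw [level_succ_of_even hm] at h ⊢
  exact h.exists_succ.2

theorem level_iff_of_odd (hm : Odd m) :
    Level E B m i q ↔ ∃ w, E i q w ∧ Level E B m (i + 1) w := by
  obtain ⟨k, rfl⟩ := hm
  exact level_succ_iff_of_even (even_two_mul k)

theorem level_succ_iff_of_odd (hm : Odd m) :
    Level E B (m + 1) i q ↔ (∃ w, E i q w ∧ Level E B (m + 1) (i + 1) w) ∨
      q ∈ B ∧ ∃ w, E i q w ∧ Level E B m (i + 1) w := by
  rw [level_succ_of_odd hm, existsEventually_iff, ← level_iff_of_odd hm, or_comm]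

theorem ExistsEventually.of_path {p : ℕ → Q} (hp : ∀ k, E (i + k) (p k) (p (k + 1))) {k : ℕ}
    (hX : X (i + k) (p k)) : ExistsEventually E X i (p 0) :=
  Nat.decreasingInduction (motive := fun j _ => ExistsEventually E X (i + j) (p j))
    (fun j _ h => .of_succ (hp j) h) (.of_mem hX) k.zero_le

theorem acceptsFrom_of_path {p : ℕ → Q} (hp : ∀ k, E (i + k) (p k) (p (k + 1)))
    (hB : ∃ᶠ k in atTop, p k ∈ B) (k : ℕ) : AcceptsFrom E B (i + k) (p k) := by
  refine ⟨fun j => p (k + j), rfl, fun j => ?_, frequently_atTop.2 fun a => ?_⟩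
  · simpa only [add_assoc] using hp (k + j)
  · obtain ⟨b, hb, hbB⟩ := frequently_atTop.1 hB (k + a)
    exact ⟨b - k, by omega, by rwa [← Nat.add_sub_cancel' (show k ≤ b by omega)] at hbB⟩

/-- A rank that may only fail to decrease at a state of `B` forces the path to visit `B` again and
again. -/
theorem AcceptsFrom.of_decreasing (Y : ℕ → ℕ → Q → Prop)
    (hY : ∀ t j z, Y t j z → ∃ t' w, E j z w ∧ Y t' (j + 1) w ∧ (z ∈ B ∨ t' < t))
    (h : Y t i q) : AcceptsFrom E B i q := by
  choose! rank next hE hnext hdecr using hY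
  let path (k : ℕ) : ℕ × Q :=
    k.rec (t, q) fun k x => (rank x.1 (i + k) x.2, next x.1 (i + k) x.2)
  have hpath (k : ℕ) : Y (path k).1 (i + k) (path k).2 := by
    induction k with
    | zero => exact h
    | succ k ih => exact hnext _ _ _ ih
  refine ⟨fun k => (path k).2, rfl, fun k => hE _ _ _ (hpath k), ?_⟩
  by_contra hcon
  simp only [not_frequently, eventually_atTop] at hcon
  obtain ⟨m, hm⟩ := hcon
  refine not_strictAnti_of_wellFoundedLT (fun k => (path (m + k)).1)
    (strictAnti_nat_of_succ_lt fun k => ?_)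
  exact (hdecr _ _ _ (hpath (m + k))).resolve_left (hm _ (Nat.le_add_right m k))

theorem AcceptsFrom.level (h : AcceptsFrom E B i q) (m : ℕ) : Level E B m i q := by
  induction m generalizing i q with
  | zero => trivial
  | succ m ih =>
    rcases m.even_or_odd with hm | hm
    · rw [level_succ_of_even hm]
      refine ⟨AcceptsFrom E B, h, fun j z hz => ⟨ih hz, ?_⟩⟩
      obtain ⟨p, rfl, hp, hB⟩ := hz
      exact ⟨p 1, hp 0, acceptsFrom_of_path hp hB 1⟩
    · rw [level_succ_of_odd hm]
      obtain ⟨p, rfl, hp, hB⟩ := h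
      obtain ⟨k, hk⟩ := hB.exists
      exact .of_path hp ⟨hk, ih (acceptsFrom_of_path hp hB k)⟩

/-- Otherwise one could forever return to `B` inside `Level E B m`. -/
theorem existsEventually_level_gap (hm : Odd m) (h : Level E B m i q)
    (hacc : ¬ AcceptsFrom E B i q) :
    ExistsEventually E (fun j z => Level E B m j z ∧ ¬ Level E B (m + 1) j z) i q := by
  let gap : ℕ → Q → Prop := fun j z => Level E B m j z ∧ ¬ Level E B (m + 1) j z
  let revisit : ℕ → Q → Prop := fun j z => z ∈ B ∧ Level E B m j z
  contrapose! hacc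
  have exists_revisit {j z} (hz : Level E B m j z) (hgap : ¬ ExistsEventually E gap j z) :
      ExistsEventually E revisit j z := by
    by_contra hcon
    exact hgap (.of_mem ⟨hz, by rwa [level_succ_of_odd hm]⟩)
  obtain ⟨t, ht⟩ := exists_revisit h hacc
  refine .of_decreasing
    (fun t j z => ReachesIn E revisit t j z ∧ ¬ ExistsEventually E gap j z) ?_ ⟨ht, hacc⟩
  rintro t j z ⟨hreach, hgap⟩
  cases hreach with
  | zero hz =>
    obtain ⟨w, hw, hlevel⟩ := (level_iff_of_odd hm).1 hz.2
    have hgapw : ¬ ExistsEventually E gap (j + 1) w := fun hcon => hgap (.of_succ hw hcon)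
    obtain ⟨t', ht'⟩ := exists_revisit hlevel hgapw
    exact ⟨t', w, hw, ⟨ht', hgapw⟩, .inl hz.1⟩
  | @succ t _ _ w hw hreach =>
    exact ⟨t, w, hw, ⟨hreach, fun hcon => hgap (.of_succ hw hcon)⟩, .inr t.lt_succ_self⟩

theorem eventually_exists_level_gap (hm : Odd m) (h : Level E B m i q)
    (hacc : ¬ AcceptsFrom E B i q) :
    ∀ᶠ j in atTop, ∃ z, Level E B m j z ∧ ¬ Level E B (m + 1) j z := by
  have hgap := existsEventually_level_gap hm h hacc
  obtain ⟨j₀, hj₀⟩ : ∃ j, ∃ z, Level E B m j z ∧ ¬ Level E B (m + 1) j z :=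
    hgap.le_of_closed (Y := fun _ _ => _) (fun j z hz => ⟨j, z, hz⟩) fun _ _ _ _ => id
  refine eventually_atTop.2 ⟨j₀, fun j hj => ?_⟩
  induction hj with
  | refl => exact hj₀
  | step _ ih =>
    obtain ⟨z, hz, hz'⟩ := ih
    obtain ⟨w, hw, hlevel⟩ := (level_iff_of_odd hm).1 hz
    exact ⟨w, hlevel, fun hcon => hz' (.of_succ hw hcon)⟩

theorem Level.acceptsFrom [Fintype Q] (h : Level E B (2 * Fintype.card Q + 1) i q) :
    AcceptsFrom E B i q := by
  by_contra hacc
  have hgap : ∀ᶠ j in atTop, ∀ k : Fin (Fintype.card Q + 1),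
      ∃ z, Level E B (2 * k + 1) j z ∧ ¬ Level E B (2 * k + 1 + 1) j z :=
    eventually_all.2 fun k =>
      eventually_exists_level_gap (odd_two_mul_add_one _) (h.of_le (by omega)) hacc
  obtain ⟨j, hj⟩ := hgap.exists
  choose z hz hz' using hj
  have z_injective : Function.Injective z := by
    refine .of_lt_imp_ne fun a b hab heq => hz' a ?_
    rw [heq]
    exact (hz b).of_le (by omega)
  simpa using Fintype.card_le_of_injective z z_injective

theorem level_iff_acceptsFrom [Fintype Q] :
    Level E B (2 * Fintype.card Q + 1) i q ↔ AcceptsFrom E B i q :=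
  ⟨Level.acceptsFrom, fun h => h.level _⟩

end Levels

section Rank

variable {Q : Type*}

/-- The largest value of `c` on the `R`-successors of `q`, and the junk value `0` if there are
none. -/
noncomputable def maxSucc (R : Q → Q → Prop) (c : Q → ℕ) (q : Q) : ℕ := sSup (c '' {z | R q z})

open scoped Classical in
/-- The rank of a state, computed from the ranks `c` of its `R`-successors: the largest of these,
raised by one at a state of `B` if it is odd and smaller than the cap `N`. -/
noncomputable def rankStep (N : ℕ) (R : Q → Q → Prop) (B : Set Q) (c : Q → ℕ) (q : Q) : ℕ :=
  if q ∈ B ∧ Odd (maxSucc R c q) ∧ maxSucc R c q < N then maxSucc R c q + 1 else maxSucc R c q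

/-- The game certifying ranks `c`, where `c'` are the ranks of the next layer. It is played inside
a set of constant rank. At even rank `m` every play must end, so that `EG` of `Level m` fails; at
odd rank `m > 1` some play must reach `B` or rank `m - 1`, so that `Level (m - 1)` holds. -/
def rankLayer (R : Q → Q → Prop) (B : Set Q) (c c' : Q → ℕ) : ReachLayer Q where
  move q := {z | R q z ∧ c' z = c q}
  universal := {q | Even (c q)}
  target := {q | (∀ z, R q z → c' z ≠ c q) ∨
    Odd (c q) ∧ (c q = 1 ∨ q ∈ B ∨ ∃ z, R q z ∧ c' z + 1 = c q)}
  move_nonempty q hq := by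
    by_contra hempty
    exact hq (.inl fun z hz hcz => hempty ⟨z, hz, hcz⟩)

/-- The sequence of games certifying the ranks `c`. -/
def rankGame (E : ℕ → Q → Q → Prop) (B : Set Q) (c : ℕ → Q → ℕ) (i : ℕ) : ReachLayer Q :=
  rankLayer (E i) B (c i) (c (i + 1))

/-- `c` satisfies the backward recurrence `rankStep`. -/
def IsRanking (N : ℕ) (E : ℕ → Q → Q → Prop) (B : Set Q) (c : ℕ → Q → ℕ) : Prop :=
  ∀ i, c i = rankStep N (E i) B (c (i + 1))

open scoped Classical in
/-- The largest `m ≤ N` such that `Level E B m` holds. -/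
noncomputable def rank (N : ℕ) (E : ℕ → Q → Q → Prop) (B : Set Q) (i : ℕ) (q : Q) : ℕ :=
  Nat.findGreatest (fun m => Level E B m i q) N

section RankStep

variable {R : Q → Q → Prop} {B : Set Q} {c : Q → ℕ} {N m : ℕ} {q z : Q}

theorem le_rankStep_of_odd (hB : q ∈ B) (h : Odd (rankStep N R B c q)) :
    N ≤ rankStep N R B c q := by
  unfold rankStep at h ⊢
  split_ifs at h ⊢ with hraise
  · exact absurd hraise.2.1.add_one (Nat.not_even_iff_odd.2 h)
  · exact le_of_not_gt fun hlt => hraise ⟨hB, h, hlt⟩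

variable [Finite Q]

theorem le_maxSucc (hz : R q z) : c z ≤ maxSucc R c q :=
  le_csSup (Set.toFinite _).bddAbove ⟨z, hz, rfl⟩

theorem exists_eq_maxSucc (h : 0 < maxSucc R c q) : ∃ z, R q z ∧ c z = maxSucc R c q := by
  have hne : (c '' {z | R q z}).Nonempty := by
    refine Set.nonempty_iff_ne_empty.2 fun hempty => h.ne' ?_
    rw [maxSucc, hempty, csSup_empty, Nat.bot_eq_zero]
  exact Nat.sSup_mem hne (Set.toFinite _).bddAbove

theorem rankStep_le (h : ∀ z, c z ≤ N) (q : Q) : rankStep N R B c q ≤ N := by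
  have hmax : maxSucc R c q ≤ N := by
    rcases Nat.eq_zero_or_pos (maxSucc R c q) with h0 | hpos
    · omega
    · obtain ⟨z, -, hz⟩ := exists_eq_maxSucc hpos
      exact hz ▸ h z
  unfold rankStep
  split_ifs <;> omega

theorem le_rankStep (hz : R q z) : c z ≤ rankStep N R B c q := by
  have := le_maxSucc (c := c) hz
  unfold rankStep
  split_ifs <;> omega

theorem exists_succ_of_rankStep_pos (h : 0 < rankStep N R B c q) :
    ∃ z, R q z ∧
      (c z = rankStep N R B c q ∨ q ∈ B ∧ Odd (c z) ∧ c z + 1 = rankStep N R B c q) := by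
  unfold rankStep at h ⊢
  split_ifs at h ⊢ with hraise
  · obtain ⟨z, hz, hcz⟩ := exists_eq_maxSucc hraise.2.1.pos
    exact ⟨z, hz, .inr ⟨hraise.1, hcz ▸ hraise.2.1, by rw [hcz]⟩⟩
  · obtain ⟨z, hz, hcz⟩ := exists_eq_maxSucc h
    exact ⟨z, hz, .inl hcz⟩

theorem succ_le_rankStep_iff_of_even (hm : Even m) :
    m + 1 ≤ rankStep N R B c q ↔ ∃ z, R q z ∧ m + 1 ≤ c z := by
  refine ⟨fun h => ?_, fun ⟨z, hz, hmz⟩ => hmz.trans (le_rankStep hz)⟩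
  obtain ⟨z, hz, hcz⟩ := exists_succ_of_rankStep_pos (Nat.zero_lt_of_lt h)
  refine ⟨z, hz, ?_⟩
  rw [Nat.even_iff] at hm
  rw [Nat.odd_iff] at hcz
  omega

theorem succ_le_rankStep_iff_of_odd (hm : Odd m) (hmN : m < N) :
    m + 1 ≤ rankStep N R B c q ↔
      (∃ z, R q z ∧ m + 1 ≤ c z) ∨ q ∈ B ∧ ∃ z, R q z ∧ m ≤ c z := by
  constructor
  · intro h
    obtain ⟨z, hz, hcz | ⟨hB, -, hcz⟩⟩ := exists_succ_of_rankStep_pos (Nat.zero_lt_of_lt h)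
    · exact .inl ⟨z, hz, by omega⟩
    · exact .inr ⟨hB, z, hz, by omega⟩
  · rintro (⟨z, hz, hmz⟩ | ⟨hB, z, hz, hmz⟩)
    · exact hmz.trans (le_rankStep hz)
    · refine (hmz.trans (le_rankStep hz)).lt_of_ne fun heq => ?_
      exact (le_rankStep_of_odd hB (heq ▸ hm)).not_gt (heq ▸ hmN)

end RankStep

variable {E : ℕ → Q → Q → Prop} {B : Set Q} {N m i : ℕ} {c : ℕ → Q → ℕ} {q w : Q}

theorem rank_le (N : ℕ) (E : ℕ → Q → Q → Prop) (B : Set Q) (i : ℕ) (q : Q) :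
    rank N E B i q ≤ N := by
  classical
  exact Nat.findGreatest_le N

theorem le_rank_iff (hm : m ≤ N) : m ≤ rank N E B i q ↔ Level E B m i q := by
  classical
  have level_rank : Level E B (rank N E B i q) i q :=
    Nat.findGreatest_spec (P := fun m => Level E B m i q) N.zero_le trivial
  exact ⟨level_rank.of_le, Nat.le_findGreatest (P := fun m => Level E B m i q) hm⟩

section Certificate

variable [Finite Q]

namespace IsRanking

theorem le_of_edge (hc : IsRanking N E B c) (hw : E i q w) : c (i + 1) w ≤ c i q :=
  hc i ▸ le_rankStep hw

theorem exists_succ_eq_or_mem (hc : IsRanking N E B c) (h : 0 < c i q) :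
    (∃ w, E i q w ∧ c (i + 1) w = c i q) ∨ Even (c i q) ∧ q ∈ B := by
  rw [hc i] at h ⊢
  obtain ⟨w, hw, hcw | ⟨hB, hodd, hcw⟩⟩ := exists_succ_of_rankStep_pos h
  · exact .inl ⟨w, hw, hcw⟩
  · exact .inr ⟨hcw ▸ hodd.add_one, hB⟩

theorem existsGlobally_of_succ_le (hc : IsRanking N E B c) (hm : Even m) (h : m + 1 ≤ c i q) :
    ExistsGlobally E (fun i q => m ≤ c i q) i q := by
  refine ⟨fun j z => m + 1 ≤ c j z, h, fun j z hz => ⟨Nat.le_of_succ_le hz, ?_⟩⟩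
  exact (succ_le_rankStep_iff_of_even hm).1 (hz.trans_eq (congrFun (hc j) z))

theorem succ_le_of_existsGlobally (hc : IsRanking N E B c)
    (hres : ∀ i q, Resolves (rankGame E B c) i q) (hm : Even m)
    (h : ExistsGlobally E (fun i q => m ≤ c i q) i q) : m + 1 ≤ c i q := by
  refine h.exists_succ.1.lt_of_ne' fun hcq => ?_
  obtain ⟨t, ht⟩ := hres i q
  have exists_move {j z} (hz : ExistsGlobally E (fun i q => m ≤ c i q) j z) (hcz : c j z = m) :
      ∃ w, E j z w ∧ c (j + 1) w = m ∧ ExistsGlobally E (fun i q => m ≤ c i q) (j + 1) w := by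
    obtain ⟨-, w, hw, hglob⟩ := hz.exists_succ
    exact ⟨w, hw, (hcz ▸ hc.le_of_edge hw).antisymm hglob.exists_succ.1, hglob⟩
  induction ht with
  | target htarget =>
    obtain ⟨w, hw, hcw, -⟩ := exists_move h hcq
    rcases htarget with hend | ⟨hodd, -⟩
    · exact hend w hw (hcw.trans hcq.symm)
    · exact Nat.not_odd_iff_even.2 hm (hcq ▸ hodd)
  | universal _ _ ih =>
    obtain ⟨w, hw, hcw, hglob⟩ := exists_move h hcq
    exact ih w ⟨hw, hcw.trans hcq.symm⟩ hglob hcw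
  | existential hodd => exact hodd (show Even _ from hcq ▸ hm)

theorem existsEventually_of_even (hc : IsRanking N E B c)
    (hres : Resolves (rankGame E B c) i q) (heven : Even (c i q)) (h : m + 1 ≤ c i q) :
    ExistsEventually E (fun i q => q ∈ B ∧ m ≤ c i q) i q := by
  obtain ⟨t, ht⟩ := hres
  induction ht with
  | target htarget =>
    rcases hc.exists_succ_eq_or_mem (Nat.zero_lt_of_lt h) with ⟨w, hw, hcw⟩ | ⟨-, hB⟩
    · rcases htarget with hend | ⟨hodd, -⟩
      · exact absurd hcw (hend w hw)
      · exact absurd heven (Nat.not_even_iff_odd.2 hodd)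
    · exact .of_mem ⟨hB, Nat.le_of_succ_le h⟩
  | universal _ _ ih =>
    rcases hc.exists_succ_eq_or_mem (Nat.zero_lt_of_lt h) with ⟨w, hw, hcw⟩ | ⟨-, hB⟩
    · exact .of_succ hw (ih w ⟨hw, hcw⟩ (hcw ▸ heven) (hcw ▸ h))
    · exact .of_mem ⟨hB, Nat.le_of_succ_le h⟩
  | existential hodd => exact absurd heven hodd

theorem existsEventually_of_odd (hc : IsRanking N E B c)
    (hres : ∀ i q, Resolves (rankGame E B c) i q) (hm : Odd m) (hodd : Odd (c i q))
    (h : m + 1 ≤ c i q) : ExistsEventually E (fun i q => q ∈ B ∧ m ≤ c i q) i q := by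
  obtain ⟨t, ht⟩ := hres i q
  induction ht with
  | @target _ i q htarget =>
    rcases htarget with hend | ⟨-, hone | hB | ⟨z, hz, hcz⟩⟩
    · rcases hc.exists_succ_eq_or_mem (Nat.zero_lt_of_lt h) with ⟨w, hw, hcw⟩ | ⟨heven, -⟩
      · exact absurd hcw (hend w hw)
      · exact absurd heven (Nat.not_even_iff_odd.2 hodd)
    · have := hm.pos
      omega
    · exact .of_mem ⟨hB, Nat.le_of_succ_le h⟩
    · have heven : Even (c (i + 1) z) := by
        rw [← hcz, Nat.odd_add_one, Nat.not_odd_iff_even] at hodd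
        exact hodd
      rw [Nat.odd_iff] at hm
      rw [Nat.even_iff] at heven
      exact .of_succ hz (hc.existsEventually_of_even (hres _ z) (Nat.even_iff.2 heven) (by omega))
  | universal heven => exact absurd heven (Nat.not_even_iff_odd.2 hodd)
  | existential _ hz _ ih => exact .of_succ hz.1 (ih (hz.2 ▸ hodd) (hz.2 ▸ h))

theorem succ_le_of_existsEventually (hc : IsRanking N E B c) (hm : Odd m) (hmN : m < N)
    (h : ExistsEventually E (fun i q => q ∈ B ∧ m ≤ c i q) i q) : m + 1 ≤ c i q := by
  refine h.le_of_closed (Y := fun i q => m + 1 ≤ c i q) ?_ fun j z w hw h =>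
    h.trans (hc.le_of_edge hw)
  rintro j z ⟨hB, hz⟩
  refine hz.lt_of_ne fun heq => hmN.not_ge ?_
  rw [heq, hc j]
  exact le_rankStep_of_odd hB (hc j ▸ heq ▸ hm)

theorem level_eq (hc : IsRanking N E B c) (hres : ∀ i q, Resolves (rankGame E B c) i q)
    (hmN : m ≤ N) : Level E B m = fun i q => m ≤ c i q := by
  induction m with
  | zero => simp only [Level, Nat.zero_le]
  | succ m ih =>
    specialize ih (Nat.le_of_succ_le hmN)
    funext i q
    rw [eq_iff_iff]
    rcases m.even_or_odd with hm | hm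
    · rw [level_succ_of_even hm, ih]
      exact ⟨hc.succ_le_of_existsGlobally hres hm, hc.existsGlobally_of_succ_le hm⟩
    · rw [level_succ_of_odd hm, ih]
      refine ⟨hc.succ_le_of_existsEventually hm hmN, fun h => ?_⟩
      rcases (c i q).even_or_odd with heven | hodd
      · exact hc.existsEventually_of_even (hres i q) heven h
      · exact hc.existsEventually_of_odd hres hm hodd h

end IsRanking

theorem isRanking_rank (N : ℕ) (E : ℕ → Q → Q → Prop) (B : Set Q) :
    IsRanking N E B (rank N E B) := by
  intro i
  funext q
  have le_rank_iff_le_rankStep {m : ℕ} (hmN : m ≤ N) :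
      m ≤ rank N E B i q ↔ m ≤ rankStep N (E i) B (rank N E B (i + 1)) q := by
    rcases m with - | m
    · simp only [Nat.zero_le]
    rw [le_rank_iff hmN]
    rcases m.even_or_odd with hm | hm
    · rw [succ_le_rankStep_iff_of_even hm, level_succ_iff_of_even hm]
      simp only [le_rank_iff hmN]
    · rw [succ_le_rankStep_iff_of_odd hm hmN, level_succ_iff_of_odd hm]
      simp only [le_rank_iff hmN, le_rank_iff (Nat.le_of_succ_le hmN)]
  exact le_antisymm ((le_rank_iff_le_rankStep (rank_le N E B i q)).1 le_rfl)
    ((le_rank_iff_le_rankStep (rankStep_le (rank_le N E B (i + 1)) q)).2 le_rfl)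

theorem resolves_rank_of_even (hN : Odd N) (h : Even (rank N E B i q)) :
    Resolves (rankGame E B (rank N E B)) i q := by
  by_contra hres
  have hlt : rank N E B i q + 1 ≤ N :=
    (rank_le N E B i q).lt_of_ne fun heq => Nat.not_even_iff_odd.2 hN (heq ▸ h)
  refine (Nat.lt_succ_self (rank N E B i q)).not_ge ((le_rank_iff hlt).2 ?_)
  rw [level_succ_of_even h]
  -- The unresolved states of the same rank are closed under taking a suitable successor.
  refine ⟨fun j z => rank N E B j z = rank N E B i q ∧
    ¬ Resolves (rankGame E B (rank N E B)) j z, ⟨rfl, hres⟩, ?_⟩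
  rintro j z ⟨hrank, hz⟩
  refine ⟨(le_rank_iff (Nat.le_of_succ_le hlt)).1 hrank.ge, ?_⟩
  by_contra! hcon
  exact hz (.of_universal (show Even _ from hrank ▸ h) fun w hw =>
    hcon w hw.1 (hw.2.trans hrank))

theorem resolves_rank_of_odd (h : Odd (rank N E B i q)) :
    Resolves (rankGame E B (rank N E B)) i q := by
  by_cases hone : rank N E B i q = 1
  · exact ⟨0, .target (.inr ⟨h, .inl hone⟩)⟩
  obtain ⟨l, hl⟩ : ∃ l, rank N E B i q = 2 * l + 1 + 1 + 1 := by
    obtain ⟨k, hk⟩ := h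
    exact ⟨k - 1, by omega⟩
  have hl_odd : Odd (2 * l + 1) := odd_two_mul_add_one l
  have hlN : 2 * l + 1 + 1 ≤ N := by have := rank_le N E B i q; omega
  have hlevel : Level E B (2 * l + 1 + 1) i q := (le_rank_iff hlN).1 (by omega)
  rw [level_succ_of_odd hl_odd] at hlevel
  obtain ⟨t, ht⟩ := hlevel
  clear hone
  induction ht with
  | zero hX => exact ⟨0, .target (.inr ⟨h, .inr (.inl hX.1)⟩)⟩
  | @succ t i q w hw hreach ih =>
    have hge : 2 * l + 1 + 1 ≤ rank N E B (i + 1) w := by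
      rw [le_rank_iff hlN, level_succ_of_odd hl_odd]
      exact ⟨t, hreach⟩
    have hle : rank N E B (i + 1) w ≤ rank N E B i q := (isRanking_rank N E B).le_of_edge hw
    rcases hge.eq_or_lt with hdrop | hkeep
    · exact ⟨0, .target (.inr ⟨h, .inr (.inr ⟨w, hw, by omega⟩)⟩)⟩
    · have hsame : rank N E B (i + 1) w = rank N E B i q := by omega
      exact .of_existential (Nat.not_even_iff_odd.2 h) ⟨hw, hsame⟩
        (ih (hsame ▸ h) (hsame.trans hl))

theorem resolves_rank (hN : Odd N) (i : ℕ) (q : Q) :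
    Resolves (rankGame E B (rank N E B)) i q :=
  (rank N E B i q).even_or_odd.elim (resolves_rank_of_even hN) resolves_rank_of_odd

theorem isRanking_and_resolves_iff (hN : Odd N) (hcN : ∀ i q, c i q ≤ N) :
    (IsRanking N E B c ∧ ∀ i q, Resolves (rankGame E B c) i q) ↔ c = rank N E B := by
  constructor
  · rintro ⟨hc, hres⟩
    funext i q
    refine eq_of_forall_le_iff fun m => ?_
    by_cases hmN : m ≤ N
    · rw [le_rank_iff hmN, hc.level_eq hres hmN]
    · have := hcN i q
      have := rank_le N E B i q
      omega
  · rintro rfl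
    exact ⟨isRanking_rank N E B, resolves_rank hN⟩

end Certificate

end Rank

section Automaton

variable {A Q : Type*} {Δ : Set (Q × A × Q)} {B : Set Q} {u : ℕ → A}

/-- The layered graph of transitions of the Büchi automaton on the `ω`-word `u`. -/
def wordEdge (Δ : Set (Q × A × Q)) (u : ℕ → A) (i : ℕ) (q z : Q) : Prop := (q, u i, z) ∈ Δ

theorem nbaAccepts_iff_acceptsFrom {q : Q} :
    NBAAccepts Δ B u q ↔ AcceptsFrom (wordEdge Δ u) B 0 q := by
  simp only [NBAAccepts, AcceptsFrom, wordEdge, zero_add, frequently_atTop]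

variable [Fintype Q]

/-- The states of the backward deterministic automaton: every state of the Büchi automaton carries
its rank, capped at `2 * Fintype.card Q + 1`, and its delay up to order type. -/
abbrev BackState (Q : Type*) [Fintype Q] : Type _ :=
  Q → Fin (2 * Fintype.card Q + 1 + 1) × Fin (Fintype.card Q)

namespace BackState

/-- The ranks stored in a state of the backward deterministic automaton. -/
def ranks (s : BackState Q) (q : Q) : ℕ := (s q).1

/-- The order types of delays stored in a state of the backward deterministic automaton. -/
def delays (s : BackState Q) (q : Q) : ℕ := (s q).2

theorem ranks_le (s : BackState Q) (q : Q) : s.ranks q ≤ 2 * Fintype.card Q + 1 :=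
  Nat.le_of_lt_succ (s q).1.isLt

theorem ext_iff {s s' : BackState Q} :
    s = s' ↔ s.ranks = s'.ranks ∧ s.delays = s'.delays := by
  simp only [funext_iff, Prod.ext_iff, Fin.ext_iff, forall_and, ranks, delays]

theorem exists_ranks_delays {c d : Q → ℕ} (hc : ∀ q, c q ≤ 2 * Fintype.card Q + 1)
    (hd : ∀ q, d q < Fintype.card Q) : ∃ s : BackState Q, s.ranks = c ∧ s.delays = d :=
  ⟨fun q => (⟨c q, Nat.lt_succ_of_le (hc q)⟩, ⟨d q, hd q⟩), rfl, rfl⟩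

end BackState

/-- The transition function: ranks and delays are computed from those of the next layer, and the
delays are then reduced to their order type. -/
noncomputable def backStep (Δ : Set (Q × A × Q)) (B : Set Q) (a : A) (s : BackState Q) :
    BackState Q :=
  let R q z := (q, a, z) ∈ Δ
  let c := rankStep (2 * Fintype.card Q + 1) R B s.ranks
  let d := orderRank ((rankLayer R B c s.ranks).delayStep s.delays)
  fun q => (⟨c q, Nat.lt_succ_of_le (rankStep_le s.ranks_le q)⟩, ⟨d q, orderRank_lt_card _ q⟩)

/-- The transitions at which no delay exceeds the maximal delay of the next layer. -/
def recurrentTransitions (Δ : Set (Q × A × Q)) (B : Set Q) :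
    Set (BackState Q × A × BackState Q) :=
  {x | (rankLayer (fun q z => (q, x.2.1, z) ∈ Δ) B x.1.ranks x.2.2.ranks).StepLeMax x.2.2.delays}

variable {r : ℕ → BackState Q}

theorem isBackRun_backStep_iff :
    IsBackRun (backStep Δ B) u r ↔
      IsRanking (2 * Fintype.card Q + 1) (wordEdge Δ u) B (fun i => (r i).ranks) ∧
        IsDelayRanking (rankGame (wordEdge Δ u) B fun i => (r i).ranks)
          (fun i => (r i).delays) := by
  simp only [IsBackRun, IsRanking, IsDelayRanking, ← forall_and]
  refine forall_congr' fun i => BackState.ext_iff.trans (and_congr_right fun hranks => ?_)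
  rw [rankGame, hranks]
  rfl

theorem gtbFinal_recurrentTransitions_iff :
    GTBFinal (fun _ : Fin 1 => recurrentTransitions Δ B) u r ↔
      ∃ᶠ i in atTop,
        (rankGame (wordEdge Δ u) B (fun i => (r i).ranks) i).StepLeMax (r (i + 1)).delays := by
  simp only [GTBFinal, forall_const, frequently_atTop]
  rfl

theorem isBackRun_and_gtbFinal_iff :
    (IsBackRun (backStep Δ B) u r ∧
        GTBFinal (fun _ : Fin 1 => recurrentTransitions Δ B) u r) ↔
      (fun i => (r i).ranks) = rank (2 * Fintype.card Q + 1) (wordEdge Δ u) B ∧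
        (fun i => (r i).delays) = fun i => orderRank
          (delay (rankGame (wordEdge Δ u) B
            (rank (2 * Fintype.card Q + 1) (wordEdge Δ u) B)) i) := by
  rw [isBackRun_backStep_iff, gtbFinal_recurrentTransitions_iff, and_assoc,
    isDelayRanking_and_frequently_stepLeMax_iff, ← and_assoc,
    isRanking_and_resolves_iff (odd_two_mul_add_one _) fun i => (r i).ranks_le]
  exact and_congr_right fun hranks => by rw [hranks]

theorem existsUnique_isBackRun_and_gtbFinal (Δ : Set (Q × A × Q)) (B : Set Q) (u : ℕ → A) :
    ∃! r, IsBackRun (backStep Δ B) u r ∧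
      GTBFinal (fun _ : Fin 1 => recurrentTransitions Δ B) u r := by
  simp only [isBackRun_and_gtbFinal_iff]
  choose r hranks hdelays using fun i => BackState.exists_ranks_delays
    (rank_le (2 * Fintype.card Q + 1) (wordEdge Δ u) B i) (orderRank_lt_card
      (delay (rankGame (wordEdge Δ u) B (rank (2 * Fintype.card Q + 1) (wordEdge Δ u) B)) i))
  refine ⟨r, ⟨funext hranks, funext hdelays⟩, fun r' ⟨hranks', hdelays'⟩ => funext fun i => ?_⟩
  rw [BackState.ext_iff, hranks, hdelays]
  exact ⟨congrFun hranks' i, congrFun hdelays' i⟩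

theorem ranks_eq_iff_nbaAccepts (hr : IsBackRun (backStep Δ B) u r)
    (hfinal : GTBFinal (fun _ : Fin 1 => recurrentTransitions Δ B) u r) (q : Q) :
    (r 0).ranks q = 2 * Fintype.card Q + 1 ↔ NBAAccepts Δ B u q := by
  have hranks := (isBackRun_and_gtbFinal_iff.1 ⟨hr, hfinal⟩).1
  rw [nbaAccepts_iff_acceptsFrom, ← level_iff_acceptsFrom, ← le_rank_iff le_rfl, ← hranks]
  exact ((r 0).ranks_le q).ge_iff_eq.symm

theorem card_backState (Q : Type*) [Fintype Q] [DecidableEq Q] :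
    Fintype.card (BackState Q) =
      (2 * Fintype.card Q * (Fintype.card Q + 1)) ^ Fintype.card Q := by
  rw [Fintype.card_fun, Fintype.card_prod, Fintype.card_fin, Fintype.card_fin]
  congr 1
  ring

end Automaton

end BackwardDet

open BackwardDet

/-- there is a constant `C > 0` such that every nondeterministic Büchi
automaton with `n ≥ 1` states has an equivalent backward deterministic automaton with a
generalized transition Büchi condition and at most `C * (2n(n+1))^n` states. -/
theorem buechi_to_backward_deterministic_via_muTL :
    ∃ C : ℕ, 0 < C ∧
      ∀ (A Q : Type) [Fintype Q], 1 ≤ Fintype.card Q →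
        ∀ (Δ : Set (Q × A × Q)) (B : Set Q) (I : Set Q),
          ∃ (P : Type) (_ : Fintype P) (ρ : A → P → P) (k : ℕ)
            (T : Fin k → Set (P × A × P)) (I' : Set P),
            Fintype.card P ≤
              C * (2 * Fintype.card Q * (Fintype.card Q + 1)) ^ Fintype.card Q ∧
            (∀ u : ℕ → A, ∃! r : ℕ → P, IsBackRun ρ u r ∧ GTBFinal T u r) ∧
            (∀ (u : ℕ → A) (r : ℕ → P), IsBackRun ρ u r → GTBFinal T u r →
              (r 0 ∈ I' ↔ ∃ q ∈ I, NBAAccepts Δ B u q)) := by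
  classical
  refine ⟨1, one_pos, fun A Q _ _ Δ B I => ?_⟩
  refine ⟨BackState Q, inferInstance, backStep Δ B, 1, fun _ => recurrentTransitions Δ B,
    {s | ∃ q ∈ I, s.ranks q = 2 * Fintype.card Q + 1}, ?_, ?_, ?_⟩
  · rw [one_mul, card_backState]
  · exact existsUnique_isBackRun_and_gtbFinal Δ B
  · intro u r hr hfinal
    simp only [Set.mem_ofPred_eq, ranks_eq_iff_nbaAccepts hr hfinal]
end

section
/- Every ω-language recognized by a nondeterministic Büchi automaton is recognized by a backward deterministic automaton with a state-based Büchi recurrence condition (augmented with a suitable set of initial states). -/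
/-- A run is final for the state-based Büchi condition `Ω` if it visits `Ω` infinitely
often. -/
def SBFinal {P : Type*} (Ω : Set P) (r : ℕ → P) : Prop :=
  ∀ m, ∃ i, m ≤ i ∧ r i ∈ Ω

/-!
Call a labelling of the positions of ω-words *backward computable* if some backward deterministic
Büchi automaton outputs it along its unique final run.  Such labellings compose, because two Büchi
conditions merge into one at the cost of a flag.

For a family of monotone operators `s a` on a finite lattice, the least solution of
`Y i = s (u i) (Y (i + 1))` is backward computable: the automaton keeps the set of all finite
approximations of `Y i`, and its recurrence condition asks that the largest of them becomes
redundant infinitely often.  Every other run contains spurious elements lying above all genuine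
ones, and each redundancy makes the number of spurious elements strictly larger at the next
position, which cannot happen infinitely often.

The set of states accepting the suffix of `u` at position `i` is obtained from the set of all
states by alternately discarding the states without an infinite path (a greatest solution) and the
states that cannot reach `B` (the complement of a least solution).  A round either leaves only
accepting states or eventually discards a state at every position, so `Nat.card Q + 1` rounds
suffice.
-/

open Filter

section Runs

variable {A P P' T : Type*} {ρ : A → P → P} {u : ℕ → A}

theorem sbFinal_iff_frequently {Ω : Set P} {r : ℕ → P} :
    SBFinal Ω r ↔ ∃ᶠ i in atTop, r i ∈ Ω :=
  frequently_atTop.symm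

theorem IsBackRun.eq_of_frequently_eq {r r' : ℕ → P} (hr : IsBackRun ρ u r)
    (hr' : IsBackRun ρ u r') (h : ∃ᶠ i in atTop, r i = r' i) : r = r' := by
  funext i
  obtain ⟨j, hij, hj⟩ := frequently_atTop.1 h i
  induction hij using Nat.decreasingInduction with
  | self => exact hj
  | of_succ k _ ih => rw [hr k, hr' k, ih]

/-- The recurrence condition `C` makes the automaton with transition function `ρ` backward
deterministic: `run u` is the only backward run on `u` that satisfies `C`. -/
def SelectsRun (ρ : A → P → P) (C : (ℕ → A) → (ℕ → P) → Prop) (run : (ℕ → A) → ℕ → P) : Prop :=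
  ∀ u r, IsBackRun ρ u r ∧ C u r ↔ r = run u

/-- A labelling of the positions of ω-words is backward computable if it is read off, state by
state, from the unique final run of a finite backward deterministic Büchi automaton. -/
def BackwardComputable (F : (ℕ → A) → ℕ → T) : Prop :=
  ∃ (P : Type) (_ : Fintype P) (ρ : A → P → P) (Ω : Set P) (run : (ℕ → A) → ℕ → P) (out : P → T),
    SelectsRun ρ (fun _ => SBFinal Ω) run ∧ ∀ u, out ∘ run u = F u

theorem SelectsRun.isBackRun {C : (ℕ → A) → (ℕ → P) → Prop} {run : (ℕ → A) → ℕ → P}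
    (h : SelectsRun ρ C run) (u : ℕ → A) : IsBackRun ρ u (run u) :=
  ((h u _).2 rfl).1

theorem SelectsRun.condition {C : (ℕ → A) → (ℕ → P) → Prop} {run : (ℕ → A) → ℕ → P}
    (h : SelectsRun ρ C run) (u : ℕ → A) : C u (run u) :=
  ((h u _).2 rfl).2

theorem isBackRun_prod_iff {σ : A × P → P' → P'} {r : ℕ → P} {c : ℕ → P'} :
    IsBackRun (fun a p => (ρ a p.1, σ (a, p.1) p.2)) u (Function.prod r c) ↔
      IsBackRun ρ u r ∧ IsBackRun σ (fun i => (u i, r (i + 1))) c := by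
  simp only [IsBackRun, Function.prod_apply, Prod.mk.injEq, forall_and]

theorem SelectsRun.prod {σ : A × P → P' → P'} {C : (ℕ → A) → (ℕ → P) → Prop}
    {C' : (ℕ → A) → (ℕ → P × P') → Prop} {run : (ℕ → A) → ℕ → P} {run' : (ℕ → A) → ℕ → P'}
    (h : SelectsRun ρ C run)
    (hC : ∀ u r c, IsBackRun σ (fun i => (u i, r (i + 1))) c → C' u (Function.prod r c) → C u r)
    (h' : ∀ u c, IsBackRun σ (fun i => (u i, run u (i + 1))) c ∧ C' u (Function.prod (run u) c) ↔
      c = run' u) :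
    SelectsRun (fun a p => (ρ a p.1, σ (a, p.1) p.2)) C'
      (fun u => Function.prod (run u) (run' u)) := by
  intro u r
  obtain ⟨r, c, rfl⟩ : ∃ r₁ r₂, r = Function.prod r₁ r₂ := ⟨fun i => (r i).1, fun i => (r i).2, rfl⟩
  rw [isBackRun_prod_iff, Function.prod_inj]
  constructor
  · rintro ⟨⟨hr, hc⟩, hfin⟩
    obtain rfl : r = run u := (h u r).1 ⟨hr, hC u r c hc hfin⟩
    exact ⟨rfl, (h' u c).1 ⟨hc, hfin⟩⟩
  · rintro ⟨rfl, hc⟩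
    obtain ⟨hc, hfin⟩ := (h' u c).2 hc
    exact ⟨⟨h.isBackRun u, hc⟩, hfin⟩

theorem SelectsRun.backwardComputable [Finite P] {Ω : Set P} {run : (ℕ → A) → ℕ → P}
    (h : SelectsRun ρ (fun _ => SBFinal Ω) run) (out : P → T) :
    BackwardComputable fun u => out ∘ run u := by
  obtain ⟨n, ⟨e⟩⟩ := Finite.exists_equiv_fin P
  refine ⟨Fin n, inferInstance, fun a p => e (ρ a (e.symm p)), e.symm ⁻¹' Ω, fun u => e ∘ run u,
    out ∘ e.symm, fun u r => ?_, fun u => ?_⟩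
  · have hr : IsBackRun (fun a p => e (ρ a (e.symm p))) u r ↔ IsBackRun ρ u (e.symm ∘ r) :=
      forall_congr' fun i => e.symm_apply_eq.symm
    rw [← e.symm_comp_eq, ← h u, hr]
    rfl
  · rw [Function.comp_assoc, ← Function.comp_assoc e.symm, e.symm_comp_self, Function.id_comp]

theorem SelectsRun.backwardComputable_of_transition [Finite P] {E : A → P → Prop}
    {run : (ℕ → A) → ℕ → P}
    (h : SelectsRun ρ (fun u r => ∃ᶠ i in atTop, E (u i) (r (i + 1))) run) (out : P → T) :
    BackwardComputable fun u => out ∘ run u := by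
  have hprod := h.prod (σ := fun a _ => E a.1 a.2) (C' := fun _ => SBFinal {p | p.2})
    (run' := fun u i => E (u i) (run u (i + 1))) ?_ ?_
  · exact hprod.backwardComputable (out ∘ Prod.fst)
  · intro u r c hc hfin
    refine (sbFinal_iff_frequently.1 hfin).mono fun i hi => ?_
    exact (hc i).mp hi
  · refine fun u c => ⟨fun hc => funext hc.1, ?_⟩
    rintro rfl
    exact ⟨fun _ => rfl, sbFinal_iff_frequently.2 (h.condition u)⟩

theorem backwardComputable_const (t : T) : BackwardComputable fun (_ : ℕ → A) (_ : ℕ) => t := by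
  have h : SelectsRun (fun (_ : A) (_ : Unit) => ()) (fun _ => SBFinal Set.univ) fun _ _ => () :=
    fun _ _ => ⟨fun _ => rfl, fun _ => ⟨fun _ => rfl, fun m => ⟨m, le_rfl, trivial⟩⟩⟩
  exact h.backwardComputable fun _ => t

end Runs

section BackStep

variable {A L : Type*} [CompleteLattice L]

/-- The operator on sequences whose fixed points are the backward runs of `s` on `u`. -/
def backStep (s : A → L →o L) (u : ℕ → A) : (ℕ → L) →o (ℕ → L) where
  toFun Y i := s (u i) (Y (i + 1))
  monotone' _ _ h i := (s (u i)).monotone (h (i + 1))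

variable (s : A → L →o L) (u : ℕ → A)

theorem isBackRun_lfp : IsBackRun (fun a => s a) u (backStep s u).lfp :=
  fun i => (congrFun (backStep s u).map_lfp i).symm

theorem isBackRun_gfp : IsBackRun (fun a => s a) u (backStep s u).gfp :=
  fun i => (congrFun (backStep s u).map_gfp i).symm

theorem backStep_iterate_succ (k i : ℕ) :
    (backStep s u)^[k + 1] ⊥ i = s (u i) ((backStep s u)^[k] ⊥ (i + 1)) := by
  rw [Function.iterate_succ_apply']
  rfl

theorem backStep_iterate_le_lfp (k i : ℕ) : (backStep s u)^[k] ⊥ i ≤ (backStep s u).lfp i := by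
  induction k generalizing i with
  | zero => exact bot_le
  | succ k ih =>
    rw [backStep_iterate_succ, isBackRun_lfp s u i]
    exact (s (u i)).monotone (ih (i + 1))

theorem exists_backStep_iterate_eq_lfp [Finite L] (i : ℕ) :
    ∃ k, (backStep s u)^[k] ⊥ i = (backStep s u).lfp i := by
  have hmono : Monotone fun k => (backStep s u)^[k] ⊥ :=
    (backStep s u).monotone.monotone_iterate_of_le_map bot_le
  have hsup (j : ℕ) : ∃ K, ∀ k, (backStep s u)^[k] ⊥ j ≤ (backStep s u)^[K] ⊥ j :=
    ⟨_, le_monotonicSequenceLimit ⟨fun k => (backStep s u)^[k] ⊥ j, fun _ _ h => hmono h j⟩⟩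
  choose K hK using hsup
  have hlfp : (backStep s u).lfp ≤ fun j => (backStep s u)^[K j] ⊥ j := by
    refine (backStep s u).lfp_le fun j => ?_
    exact (backStep_iterate_succ s u (K (j + 1)) j).symm.trans_le (hK j _)
  exact ⟨K i, (backStep_iterate_le_lfp s u _ i).antisymm (hlfp i)⟩

end BackStep

section Cascade

variable {A P T T' : Type*} {Ω₁ Ω₂ : Set P} {r : ℕ → P} {c : ℕ → Prop}

/-- Update of the flag that merges two Büchi conditions.  Along a run `r` the flag at `i` says that,
strictly after `i`, the set `Ω₂` is visited no later than `Ω₁`. -/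
def flagStep (Ω₁ Ω₂ : Set P) (p : P) : Prop →o Prop where
  toFun c := p ∈ Ω₂ ∨ p ∉ Ω₁ ∧ c
  monotone' _ _ h := Or.imp_right (And.imp_right h)

/-- The merged Büchi condition: a visit to `Ω₂` such that from now on `Ω₁` is visited before `Ω₂`
recurs, or `Ω₂` does not recur. -/
def flagFinal (Ω₁ Ω₂ : Set P) : Set (P × Prop) :=
  {p | p.1 ∈ Ω₂ ∧ (p.1 ∈ Ω₁ ∨ ¬p.2)}

theorem SBFinal.flagFinal_prod (hc : IsBackRun (fun p => flagStep Ω₁ Ω₂ p) (fun i => r (i + 1)) c)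
    (h₁ : SBFinal Ω₁ r) (h₂ : SBFinal Ω₂ r) : SBFinal (flagFinal Ω₁ Ω₂) (Function.prod r c) := by
  by_contra hfin
  obtain ⟨m, hm⟩ : ∃ m, ∀ i, m ≤ i → r i ∈ Ω₂ → r i ∉ Ω₁ ∧ c i := by
    simpa [SBFinal, flagFinal] using hfin
  obtain ⟨i, hmi, hi⟩ := h₂ m
  have avoids : ∀ k, i ≤ k → r k ∉ Ω₁ ∧ c k := by
    intro k hik
    induction k, hik using Nat.le_induction with
    | base => exact hm i hmi hi
    | succ k hik ih =>
      rcases (hc k).mp ih.2 with h | h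
      · exact hm (k + 1) (by omega) h
      · exact h
  obtain ⟨k, hik, hk⟩ := h₁ i
  exact (avoids k hik).1 hk

theorem SBFinal.of_flagFinal (hc : IsBackRun (fun p => flagStep Ω₁ Ω₂ p) (fun i => r (i + 1)) c)
    (h : SBFinal (flagFinal Ω₁ Ω₂) (Function.prod r c)) : SBFinal Ω₁ r ∧ SBFinal Ω₂ r := by
  refine ⟨?_, fun m => (h m).imp fun i hi => ⟨hi.1, hi.2.1⟩⟩
  by_contra hfin
  obtain ⟨m, hm⟩ : ∃ m, ∀ i, m ≤ i → r i ∉ Ω₁ := by simpa [SBFinal] using hfin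
  obtain ⟨i, hmi, -, hi⟩ := h m
  have unset : ∀ k, i ≤ k → ¬c k := by
    intro k hik
    induction k, hik using Nat.le_induction with
    | base => exact hi.resolve_left (hm i hmi)
    | succ k hik ih => exact fun hk => ih ((hc k).mpr (Or.inr ⟨hm (k + 1) (by omega), hk⟩))
  obtain ⟨k, hik, hk, -⟩ := h (i + 1)
  obtain ⟨j, rfl⟩ : ∃ j, k = j + 1 := ⟨k - 1, by omega⟩
  exact unset j (by omega) ((hc j).mpr (Or.inl hk))

theorem SelectsRun.backwardComputable_of_inter [Finite P] {ρ : A → P → P}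
    {run : (ℕ → A) → ℕ → P}
    (h : SelectsRun ρ (fun _ r => SBFinal Ω₁ r ∧ SBFinal Ω₂ r) run) (out : P → T) :
    BackwardComputable fun u => out ∘ run u := by
  have hprod := h.prod (σ := fun a => flagStep Ω₁ Ω₂ a.2) (C' := fun _ => SBFinal (flagFinal Ω₁ Ω₂))
    (run' := fun u => (backStep (flagStep Ω₁ Ω₂) fun i => run u (i + 1)).lfp) ?_ ?_
  · exact hprod.backwardComputable (out ∘ Prod.fst)
  · exact fun u r c hc hfin => SBFinal.of_flagFinal hc hfin
  · intro u c
    have hlfp := isBackRun_lfp (flagStep Ω₁ Ω₂) fun i => run u (i + 1)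
    obtain ⟨h₁, h₂⟩ := h.condition u
    constructor
    · rintro ⟨hc, -⟩
      have hvisit : ∃ᶠ i in atTop, run u (i + 1) ∈ Ω₂ :=
        frequently_map.1 ((map_add_atTop_eq_nat 1).symm ▸ sbFinal_iff_frequently.1 h₂ :
          ∃ᶠ i in map (· + 1) atTop, run u i ∈ Ω₂)
      refine IsBackRun.eq_of_frequently_eq hc hlfp (hvisit.mono fun i hi => ?_)
      rw [hc i, hlfp i]
      exact propext (iff_of_true (Or.inl hi) (Or.inl hi))
    · rintro rfl
      exact ⟨hlfp, h₁.flagFinal_prod hlfp h₂⟩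

theorem BackwardComputable.cascade {F : (ℕ → A) → ℕ → T} {G : (ℕ → A × T) → ℕ → T'}
    (hG : BackwardComputable G) (hF : BackwardComputable F) :
    BackwardComputable fun u => G (Function.prod u (F u)) := by
  obtain ⟨P, _, ρ, Ω, run, out, hrun, hout⟩ := hF
  obtain ⟨P', _, ρ', Ω', run', out', hrun', hout'⟩ := hG
  have hword (u : ℕ → A) (c : ℕ → P') :
      IsBackRun (fun a : A × P => ρ' (a.1, out (ρ a.1 a.2))) (fun i => (u i, run u (i + 1))) c ↔
        IsBackRun ρ' (Function.prod u (F u)) c := by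
    simp only [IsBackRun, Function.prod_apply, ← hout, Function.comp_apply,
      ← hrun.isBackRun u _]
  have hprod := hrun.prod (σ := fun a : A × P => ρ' (a.1, out (ρ a.1 a.2)))
    (C' := fun _ r => SBFinal (Prod.fst ⁻¹' Ω) r ∧ SBFinal (Prod.snd ⁻¹' Ω') r)
    (run' := fun u => run' (Function.prod u (F u))) (fun _ _ _ _ hfin => hfin.1) fun u c => ?_
  · simp only [← hout']
    exact hprod.backwardComputable_of_inter (out' ∘ Prod.snd)
  · rw [← hrun', hword]
    exact and_congr_right fun _ => and_iff_right (hrun.condition u)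

end Cascade

section FixedPoints

variable {A L : Type*} [CompleteLattice L] (s : A → L →o L) {u : ℕ → A}

/-- The set of all finite approximations of the least fixed point at position `i`. -/
def approximants (u : ℕ → A) (i : ℕ) : Set L :=
  Set.range fun k => (backStep s u)^[k] ⊥ i

/-- Transition function of the automaton that tracks sets of approximants. -/
def approximantsStep (a : A) (C : Set L) : Set L :=
  insert ⊥ (s a '' C)

theorem isBackRun_approximants : IsBackRun (approximantsStep s) u (approximants s u) := by
  intro i
  rw [approximants, ← Nat.range_of_succ, approximantsStep, approximants, ← Set.range_comp,
    Set.insert_eq]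
  congr 2
  exact funext fun k => backStep_iterate_succ s u k i

theorem isGreatest_approximants [Finite L] (u : ℕ → A) (i : ℕ) :
    IsGreatest (approximants s u i) ((backStep s u).lfp i) := by
  refine ⟨exists_backStep_iterate_eq_lfp s u i, ?_⟩
  rintro _ ⟨k, rfl⟩
  exact backStep_iterate_le_lfp s u k i

/-- The largest element of `C` contributes nothing to `approximantsStep s a C`. -/
def GreatestRedundant (a : A) (C : Set L) : Prop :=
  ∃ t, IsGreatest C t ∧ s a t ∈ approximantsStep s a (C \ {t})

theorem frequently_greatestRedundant_approximants [Finite L] (u : ℕ → A) :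
    ∃ᶠ i in atTop, GreatestRedundant s (u i) (approximants s u (i + 1)) := by
  intro hnever
  obtain ⟨m, hm⟩ := eventually_atTop.1 hnever
  have needed : ∀ i, m ≤ i → (backStep s u).lfp i ∉
      approximantsStep s (u i) (approximants s u (i + 1) \ {(backStep s u).lfp (i + 1)}) := by
    intro i hi hmem
    rw [isBackRun_lfp s u i] at hmem
    exact hm i hi ⟨_, isGreatest_approximants s u (i + 1), hmem⟩
  have unreached : ∀ k i, m ≤ i → (backStep s u)^[k] ⊥ i ≠ (backStep s u).lfp i := by
    intro k
    induction k with
    | zero => exact fun i hi h => needed i hi (h ▸ Set.mem_insert _ _)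
    | succ k ih =>
      intro i hi h
      refine needed i hi (Or.inr ⟨(backStep s u)^[k] ⊥ (i + 1), ⟨⟨k, rfl⟩, ?_⟩, ?_⟩)
      · exact ih (i + 1) (by omega)
      · rw [← h, backStep_iterate_succ]
  obtain ⟨k, hk⟩ := exists_backStep_iterate_eq_lfp s u m
  exact unreached k m le_rfl hk

section Spurious

variable {s} {C : ℕ → Set L}

theorem approximants_subset (hC : IsBackRun (approximantsStep s) u C) (i : ℕ) :
    approximants s u i ⊆ C i := by
  rintro _ ⟨k, rfl⟩
  induction k generalizing i with
  | zero =>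
    rw [hC i]
    exact Set.mem_insert _ _
  | succ k ih =>
    rw [hC i]
    exact Or.inr ⟨_, ih (i + 1), (backStep_iterate_succ s u k i).symm⟩

theorem exists_spurious_preimage {i : ℕ} {D : Set L} {f : L}
    (hfD : f ∈ approximantsStep s (u i) D) (hf : f ∉ approximants s u i) :
    ∃ g ∈ D \ approximants s u (i + 1), s (u i) g = f := by
  rw [isBackRun_approximants s i] at hf
  rcases hfD with rfl | ⟨g, hg, rfl⟩
  · exact absurd (Set.mem_insert _ _) hf
  · exact ⟨g, ⟨hg, fun hg' => hf (Or.inr ⟨g, hg', rfl⟩)⟩, rfl⟩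

theorem spurious_subset_image (hC : IsBackRun (approximantsStep s) u C) (i : ℕ) :
    C i \ approximants s u i ⊆ s (u i) '' (C (i + 1) \ approximants s u (i + 1)) :=
  fun _ ⟨hfC, hf⟩ => exists_spurious_preimage (hC i ▸ hfC) hf

theorem iterate_le_spurious (hC : IsBackRun (approximantsStep s) u C) (k i : ℕ) {f : L}
    (hf : f ∈ C i \ approximants s u i) : (backStep s u)^[k] ⊥ i ≤ f := by
  induction k generalizing i f with
  | zero => exact bot_le
  | succ k ih =>
    obtain ⟨g, hg, rfl⟩ := spurious_subset_image hC i hf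
    rw [backStep_iterate_succ]
    exact (s (u i)).monotone (ih (i + 1) hg)

theorem spurious_of_isGreatest (hC : IsBackRun (approximantsStep s) u C) {i : ℕ} {t : L}
    (ht : IsGreatest (C i) t) (hne : (C i \ approximants s u i).Nonempty) :
    t ∈ C i \ approximants s u i := by
  refine ⟨ht.1, fun ⟨k, hk⟩ => ?_⟩
  obtain ⟨f, hfC, hf⟩ := hne
  have htf : t ≤ f := hk ▸ iterate_le_spurious hC k i ⟨hfC, hf⟩
  exact hf ⟨k, hk.trans (htf.antisymm (ht.2 hfC))⟩

variable [Finite L]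

theorem ncard_spurious_monotone (hC : IsBackRun (approximantsStep s) u C) :
    Monotone fun i => (C i \ approximants s u i).ncard :=
  monotone_nat_of_le_succ fun i =>
    (Set.ncard_le_ncard (spurious_subset_image hC i)).trans (Set.ncard_image_le (Set.toFinite _))

theorem ncard_spurious_lt_of_greatestRedundant (hC : IsBackRun (approximantsStep s) u C) {i : ℕ}
    (hred : GreatestRedundant s (u i) (C (i + 1)))
    (hne : (C (i + 1) \ approximants s u (i + 1)).Nonempty) :
    (C i \ approximants s u i).ncard < (C (i + 1) \ approximants s u (i + 1)).ncard := by
  obtain ⟨t, ht, hst⟩ := hred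
  have hsub : C i \ approximants s u i ⊆
      s (u i) '' ((C (i + 1) \ approximants s u (i + 1)) \ {t}) := by
    rintro f ⟨hfC, hf⟩
    obtain ⟨g, hg, rfl⟩ := spurious_subset_image hC i ⟨hfC, hf⟩
    by_cases hgt : g = t
    · subst hgt
      obtain ⟨g', ⟨⟨hg'C, hg't⟩, hg'⟩, heq⟩ := exists_spurious_preimage hst hf
      exact ⟨g', ⟨⟨hg'C, hg'⟩, hg't⟩, heq⟩
    · exact ⟨g, ⟨hg, hgt⟩, rfl⟩
  calc (C i \ approximants s u i).ncard
      ≤ ((C (i + 1) \ approximants s u (i + 1)) \ {t}).ncard :=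
        (Set.ncard_le_ncard hsub).trans (Set.ncard_image_le (Set.toFinite _))
    _ < (C (i + 1) \ approximants s u (i + 1)).ncard :=
        Set.ncard_sdiff_singleton_lt_of_mem (spurious_of_isGreatest hC ht hne)

theorem eq_approximants (hC : IsBackRun (approximantsStep s) u C)
    (hred : ∃ᶠ i in atTop, GreatestRedundant s (u i) (C (i + 1))) : C = approximants s u := by
  have hmono := ncard_spurious_monotone hC
  obtain ⟨b, N, hN⟩ := converges_of_monotone_of_bounded hmono
    fun i => Set.ncard_le_card (C i \ approximants s u i)
  have hempty (i : ℕ) : C i \ approximants s u i = ∅ := by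
    by_contra hne
    obtain ⟨j, hj, hjred⟩ := frequently_atTop.1 hred (max i N)
    have hpos : 0 < (C i \ approximants s u i).ncard :=
      (Set.ncard_pos).2 (Set.nonempty_iff_ne_empty.2 hne)
    have hne' : (C (j + 1) \ approximants s u (j + 1)).Nonempty :=
      (Set.ncard_pos).1 (hpos.trans_le (hmono (by omega)))
    have hlt := ncard_spurious_lt_of_greatestRedundant hC hjred hne'
    exact hlt.ne ((hN j (by omega)).trans (hN (j + 1) (by omega)).symm)
  exact funext fun i => (Set.sdiff_eq_empty.1 (hempty i)).antisymm (approximants_subset hC i)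

end Spurious

variable [Finite L]

theorem selectsRun_approximants :
    SelectsRun (approximantsStep s)
      (fun u C => ∃ᶠ i in atTop, GreatestRedundant s (u i) (C (i + 1))) (approximants s) := by
  refine fun u C => ⟨fun h => eq_approximants h.1 h.2, ?_⟩
  rintro rfl
  exact ⟨isBackRun_approximants s, frequently_greatestRedundant_approximants s u⟩

theorem backwardComputable_lfp : BackwardComputable fun u => (backStep s u).lfp := by
  have hsSup (u : ℕ → A) : sSup ∘ approximants s u = (backStep s u).lfp :=
    funext fun i => (isGreatest_approximants s u i).isLUB.sSup_eq
  simpa only [hsSup] using (selectsRun_approximants s).backwardComputable_of_transition sSup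

theorem backwardComputable_gfp : BackwardComputable fun u => (backStep s u).gfp :=
  backwardComputable_lfp fun a => (s a).dual

end FixedPoints

section Buechi

variable {Q A : Type*} (Δ : Set (Q × A × Q)) (B : Set Q) (u : ℕ → A) (S : ℕ → Set Q)

/-- The set of states from which the automaton accepts the suffix of `u` starting at `i`. -/
def accepted (i : ℕ) : Set Q :=
  {q | NBAAccepts Δ B (fun k => u (i + k)) q}

/-- One backward step of `live`; a letter carries the set of states allowed at its position. -/
def liveStep (a : A × Set Q) : Set Q →o Set Q where
  toFun X := {q ∈ a.2 | ∃ q' ∈ X, (q, a.1, q') ∈ Δ}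
  monotone' _ _ h _ hq := ⟨hq.1, hq.2.imp fun _ hq' => ⟨h hq'.1, hq'.2⟩⟩

/-- One backward step of `reach`; a letter carries the set of states allowed at its position. -/
def reachStep (a : A × Set Q) : Set Q →o Set Q where
  toFun Y := {q ∈ a.2 | q ∈ B ∨ ∃ q' ∈ Y, (q, a.1, q') ∈ Δ}
  monotone' _ _ h _ hq := ⟨hq.1, hq.2.imp_right fun hq' => hq'.imp fun _ hq' => ⟨h hq'.1, hq'.2⟩⟩

/-- The states having an infinite path that stays inside `S`. -/
def live : ℕ → Set Q :=
  (backStep (liveStep Δ) (Function.prod u S)).gfp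

/-- The states having a finite path that stays inside `S` and ends in `B`. -/
def reach : ℕ → Set Q :=
  (backStep (reachStep Δ B) (Function.prod u S)).lfp

/-- One round of discarding: the states with an infinite path inside `S`, then those among them
that can reach `B` without leaving the remaining states. -/
def prune : ℕ → Set Q :=
  reach Δ B u (live Δ u S)

/-- The length of a shortest path inside `S` to `B`, counted in states; it is the junk value `0`
outside `reach Δ B u S`. -/
noncomputable def reachRank (i : ℕ) (q : Q) : ℕ :=
  sInf {k | q ∈ (backStep (reachStep Δ B) (Function.prod u S))^[k] ⊥ i}

variable {Δ B u S}

theorem mem_live_iff {i : ℕ} {q : Q} :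
    q ∈ live Δ u S i ↔ q ∈ S i ∧ ∃ q' ∈ live Δ u S (i + 1), (q, u i, q') ∈ Δ :=
  Set.ext_iff.1 (isBackRun_gfp (liveStep Δ) (Function.prod u S) i) q

theorem mem_reach_iff {i : ℕ} {q : Q} :
    q ∈ reach Δ B u S i ↔
      q ∈ S i ∧ (q ∈ B ∨ ∃ q' ∈ reach Δ B u S (i + 1), (q, u i, q') ∈ Δ) :=
  Set.ext_iff.1 (isBackRun_lfp (reachStep Δ B) (Function.prod u S) i) q

theorem live_le : live Δ u S ≤ S :=
  fun _ _ hq => (mem_live_iff.1 hq).1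

theorem reach_le : reach Δ B u S ≤ S :=
  fun _ _ hq => (mem_reach_iff.1 hq).1

theorem apply_mem_accepted {i : ℕ} {r : ℕ → Q} (hr : ∀ k, (r k, u (i + k), r (k + 1)) ∈ Δ)
    (hB : ∀ m, ∃ k, m ≤ k ∧ r k ∈ B) (k : ℕ) : r k ∈ accepted Δ B u (i + k) := by
  refine ⟨fun l => r (k + l), rfl, fun l => ?_, fun m => ?_⟩
  · simpa only [add_assoc] using hr (k + l)
  · obtain ⟨j, hj, hjB⟩ := hB (k + m)
    obtain ⟨l, rfl⟩ := Nat.exists_eq_add_of_le (le_of_add_le_left hj)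
    exact ⟨l, Nat.le_of_add_le_add_left hj, hjB⟩

theorem accepted_le_live (h : accepted Δ B u ≤ S) : accepted Δ B u ≤ live Δ u S := by
  refine OrderHom.le_gfp _ fun i q hq => ⟨h i hq, ?_⟩
  obtain ⟨r, rfl, hr, hB⟩ := hq
  exact ⟨r 1, apply_mem_accepted hr hB 1, hr 0⟩

theorem accepted_le_reach (h : accepted Δ B u ≤ S) : accepted Δ B u ≤ reach Δ B u S := by
  rintro i _ ⟨r, rfl, hr, hB⟩
  have hS (k : ℕ) : r k ∈ S (i + k) := h _ (apply_mem_accepted hr hB k)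
  obtain ⟨n, -, hn⟩ := hB 0
  have hreach : ∀ k ≤ n, r k ∈ reach Δ B u S (i + k) := by
    intro k hk
    induction hk using Nat.decreasingInduction with
    | self => exact mem_reach_iff.2 ⟨hS n, Or.inl hn⟩
    | of_succ k _ ih => exact mem_reach_iff.2 ⟨hS k, Or.inr ⟨r (k + 1), ih, hr k⟩⟩
  exact hreach 0 n.zero_le

theorem accepted_le_prune (h : accepted Δ B u ≤ S) : accepted Δ B u ≤ prune Δ B u S :=
  accepted_le_reach (accepted_le_live h)

theorem accepted_le_prune_iterate (n : ℕ) : accepted Δ B u ≤ (prune Δ B u)^[n] ⊤ := by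
  induction n with
  | zero => exact le_top
  | succ n ih =>
    rw [Function.iterate_succ_apply']
    exact accepted_le_prune ih

theorem le_accepted_of_rank {α : Type*} [Preorder α] [WellFoundedLT α] (rank : ℕ → Q → α)
    (h : ∀ i, ∀ q ∈ S i, ∃ q' ∈ S (i + 1),
      (q, u i, q') ∈ Δ ∧ (q ∈ B ∨ rank (i + 1) q' < rank i q)) :
    S ≤ accepted Δ B u := by
  intro i q hq
  choose next hnext hΔ hrank using h
  let r : ∀ k, S (i + k) :=
    fun k => k.rec ⟨q, hq⟩ fun k p => ⟨next (i + k) p p.2, hnext (i + k) p p.2⟩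
  have hstep (k : ℕ) : ((r k).1, u (i + k), (r (k + 1)).1) ∈ Δ := hΔ (i + k) (r k).1 (r k).2
  refine ⟨fun k => (r k).1, rfl, hstep, ?_⟩
  by_contra! hB
  obtain ⟨m, hm⟩ := hB
  refine not_strictAnti_of_wellFoundedLT (fun k => rank (i + (m + k)) (r (m + k)).1) ?_
  exact strictAnti_nat_of_succ_lt fun k =>
    (hrank (i + (m + k)) (r (m + k)).1 (r (m + k)).2).resolve_left (hm (m + k) (by omega))

theorem eventually_exists_mem_live_notMem_prune (h : ¬live Δ u S ≤ prune Δ B u S) :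
    ∀ᶠ i in atTop, ∃ q ∈ live Δ u S i, q ∉ prune Δ B u S i := by
  obtain ⟨m, hm⟩ := not_forall.1 h
  refine eventually_atTop.2 ⟨m, fun i hmi => ?_⟩
  induction i, hmi using Nat.le_induction with
  | base => exact Set.not_subset.1 hm
  | succ i _ ih =>
    obtain ⟨q, hq, hq_prune⟩ := ih
    obtain ⟨-, q', hq', hqq'⟩ := mem_live_iff.1 hq
    exact ⟨q', hq', fun hq'_prune => hq_prune (mem_reach_iff.2 ⟨hq, Or.inr ⟨q', hq'_prune, hqq'⟩⟩)⟩

theorem eventually_prune_ssubset (h : ¬live Δ u S ≤ prune Δ B u S) :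
    ∀ᶠ i in atTop, prune Δ B u S i ⊂ S i := by
  filter_upwards [eventually_exists_mem_live_notMem_prune h] with i ⟨q, hq, hq_prune⟩
  exact ((reach_le i).ssubset_of_mem_notMem hq hq_prune).trans_subset (live_le i)

section Finite

variable [Finite Q]

theorem exists_reachRank_lt {i : ℕ} {q : Q} (hq : q ∈ reach Δ B u S i) (hqB : q ∉ B) :
    ∃ q' ∈ S (i + 1), (q, u i, q') ∈ Δ ∧ reachRank Δ B u S (i + 1) q' < reachRank Δ B u S i q := by
  have hmem : q ∈ (backStep (reachStep Δ B) (Function.prod u S))^[reachRank Δ B u S i q] ⊥ i := by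
    obtain ⟨k, hk⟩ := exists_backStep_iterate_eq_lfp (reachStep Δ B) (Function.prod u S) i
    exact Nat.sInf_mem (s := {k | q ∈ (backStep (reachStep Δ B) (Function.prod u S))^[k] ⊥ i})
      ⟨k, hk.ge hq⟩
  cases hrank : reachRank Δ B u S i q with
  | zero =>
    rw [hrank] at hmem
    exact absurd hmem (Set.notMem_empty q)
  | succ k =>
    rw [hrank, backStep_iterate_succ] at hmem
    obtain ⟨q', hq', hqq'⟩ := hmem.2.resolve_left hqB
    have hq'_reach : q' ∈ reach Δ B u S (i + 1) :=
      Set.mem_of_subset_of_mem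
        (backStep_iterate_le_lfp (reachStep Δ B) (Function.prod u S) k (i + 1)) hq'
    exact ⟨q', reach_le _ hq'_reach, hqq', Nat.lt_succ_of_le (Nat.sInf_le hq')⟩

theorem live_le_accepted (h : live Δ u S ≤ prune Δ B u S) : live Δ u S ≤ accepted Δ B u := by
  refine le_accepted_of_rank (reachRank Δ B u (live Δ u S)) fun i q hq => ?_
  by_cases hqB : q ∈ B
  · obtain ⟨-, q', hq', hqq'⟩ := mem_live_iff.1 hq
    exact ⟨q', hq', hqq', Or.inl hqB⟩
  · obtain ⟨q', hq', hqq', hlt⟩ := exists_reachRank_lt (h i hq) hqB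
    exact ⟨q', hq', hqq', Or.inr hlt⟩

theorem prune_le_accepted_or_eventually_ssubset :
    prune Δ B u S ≤ accepted Δ B u ∨ ∀ᶠ i in atTop, prune Δ B u S i ⊂ S i := by
  by_cases h : live Δ u S ≤ prune Δ B u S
  · exact Or.inl (reach_le.trans (live_le_accepted h))
  · exact Or.inr (eventually_prune_ssubset h)

variable (Δ B u)

theorem prune_iterate_le_accepted_or_eventually_ncard_add_le (n : ℕ) :
    (prune Δ B u)^[n] ⊤ ≤ accepted Δ B u ∨
      ∀ᶠ i in atTop, ((prune Δ B u)^[n] ⊤ i).ncard + n ≤ Nat.card Q := by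
  induction n with
  | zero => exact Or.inr (Eventually.of_forall fun i => Set.ncard_le_card _)
  | succ n ih =>
    rw [Function.iterate_succ_apply']
    rcases ih with hle | hcard
    · exact Or.inl ((reach_le.trans live_le).trans hle)
    · refine prune_le_accepted_or_eventually_ssubset.imp_right fun hss => ?_
      filter_upwards [hcard, hss] with i hi hlt
      have := Set.ncard_lt_ncard hlt
      omega

theorem prune_iterate_eq_accepted : (prune Δ B u)^[Nat.card Q + 1] ⊤ = accepted Δ B u := by
  refine le_antisymm ?_ (accepted_le_prune_iterate _)
  refine (prune_iterate_le_accepted_or_eventually_ncard_add_le Δ B u _).resolve_right fun h => ?_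
  obtain ⟨i, hi⟩ := h.exists
  omega

theorem backwardComputable_prune {F : (ℕ → A) → ℕ → Set Q} (hF : BackwardComputable F) :
    BackwardComputable fun u => prune Δ B u (F u) :=
  (backwardComputable_lfp (reachStep Δ B)).cascade
    ((backwardComputable_gfp (liveStep Δ)).cascade hF)

theorem backwardComputable_accepted : BackwardComputable (accepted Δ B) := by
  have hiter (n : ℕ) : BackwardComputable fun u => (prune Δ B u)^[n] ⊤ := by
    induction n with
    | zero => exact backwardComputable_const ⊤
    | succ n ih =>
      simp only [Function.iterate_succ_apply']
      exact backwardComputable_prune Δ B ih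
  simpa only [prune_iterate_eq_accepted] using hiter (Nat.card Q + 1)

end Finite

end Buechi

/-- completeness, Carton–Michel: every ω-language recognized by a
nondeterministic Büchi automaton is recognized by a backward deterministic automaton with
a state-based Büchi recurrence condition, augmented with a suitable set of initial
states. -/
theorem buechi_language_backward_deterministic {Q A : Type*} [Fintype Q]
    (Δ : Set (Q × A × Q)) (B : Set Q) (I : Set Q) :
    ∃ (P : Type) (_ : Fintype P) (ρ : A → P → P) (Ω : Set P) (I' : Set P),
      (∀ u : ℕ → A, ∃! r : ℕ → P, IsBackRun ρ u r ∧ SBFinal Ω r) ∧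
      (∀ (u : ℕ → A) (r : ℕ → P), IsBackRun ρ u r → SBFinal Ω r →
        (r 0 ∈ I' ↔ ∃ q ∈ I, NBAAccepts Δ B u q)) := by
  obtain ⟨P, hP, ρ, Ω, run, out, hrun, hout⟩ := backwardComputable_accepted Δ B
  refine ⟨P, hP, ρ, Ω, {p | ∃ q ∈ I, q ∈ out p},
    fun u => ⟨run u, (hrun u _).2 rfl, fun r => (hrun u r).1⟩, fun u r hr hfin => ?_⟩
  obtain rfl : r = run u := (hrun u r).1 ⟨hr, hfin⟩
  have hout₀ : out (run u 0) = {q | NBAAccepts Δ B u q} := by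
    simpa only [accepted, zero_add, Function.comp_apply] using congrFun (hout u) 0
  simp only [Set.mem_ofPred_eq, hout₀]
end
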